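/- arXiv:1711.03652 — 3 statements merged into one kernel-verified Lean document; each statement's English description precedes it below -/
import Mathlib

section
/- Let E be a complex Banach space and T : E → E a bounded linear operator, and suppose that for some integer t1 ≥ 1 the operator T^{t1} is a limit in operator norm of bounded finite-rank operators (for every ε > 0 there is a bounded linear operator F of finite rank with ‖T^{t1} − F‖ ≤ ε). Then T has a discrete spectrum away from zero: for every compact set K ⊆ ℂ \ {0}, the set spectrum(T) ∩ K is finite; every z0 ∈ spectrum(T) ∩ K is an isolated point of spectrum(T); and for all sufficiently small ε1 > 0 the Riesz projection P(z0) = (1/2πi) ∮_{|z−z0|=ε1} (zI − T)^{−1} dz is a bounded operator of finite rank. -/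
open scoped Topology

noncomputable section

/-- A continuous linear operator has finite rank if its range is
finite-dimensional. -/
def FinRank {E : Type*} [NormedAddCommGroup E] [NormedSpace ℂ E]
    (F : E →L[ℂ] E) : Prop :=
  FiniteDimensional ℂ (LinearMap.range (F : E →ₗ[ℂ] E))

/-- The Riesz projection associated with an operator `T` and a point `z0`,
at radius `r`: `(1/2πi) ∮_{|z−z0|=r} (zI − T)⁻¹ dz`. -/
noncomputable def rieszProjection {E : Type*} [NormedAddCommGroup E]
    [NormedSpace ℂ E] [CompleteSpace E] (T : E →L[ℂ] E) (z0 : ℂ) (r : ℝ) :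
    E →L[ℂ] E :=
  ((2 * Real.pi * Complex.I)⁻¹ : ℂ) •
    (∮ z in C(z0, r), Ring.inverse (algebraMap ℂ (E →L[ℂ] E) z - T))

lemma FinRank.mul_left' {E : Type*} [NormedAddCommGroup E] [NormedSpace ℂ E]
    {F : E →L[ℂ] E} (hF : FinRank F) (X : E →L[ℂ] E) : FinRank (X * F) := by
  unfold FinRank at *
  have : LinearMap.range ((X * F : E →L[ℂ] E) : E →ₗ[ℂ] E)
      = (LinearMap.range (F : E →ₗ[ℂ] E)).map (X : E →ₗ[ℂ] E) := by
    rw [← LinearMap.range_comp]; rfl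
  rw [this]
  infer_instance

lemma FinRank.mul_right' {E : Type*} [NormedAddCommGroup E] [NormedSpace ℂ E]
    {F : E →L[ℂ] E} (hF : FinRank F) (X : E →L[ℂ] E) : FinRank (F * X) := by
  unfold FinRank at *
  have : LinearMap.range ((F * X : E →L[ℂ] E) : E →ₗ[ℂ] E)
      ≤ (LinearMap.range (F : E →ₗ[ℂ] E)) := by
    rintro _ ⟨x, rfl⟩
    exact ⟨X x, rfl⟩
  exact Submodule.finiteDimensional_of_le this

lemma FinRank.add' {E : Type*} [NormedAddCommGroup E] [NormedSpace ℂ E]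
    {F G : E →L[ℂ] E} (hF : FinRank F) (hG : FinRank G) : FinRank (F + G) := by
  unfold FinRank at *
  have : LinearMap.range ((F + G : E →L[ℂ] E) : E →ₗ[ℂ] E)
      ≤ LinearMap.range (F : E →ₗ[ℂ] E) ⊔ LinearMap.range (G : E →ₗ[ℂ] E) := by
    rintro _ ⟨x, rfl⟩
    exact Submodule.add_mem_sup ⟨x, rfl⟩ ⟨x, rfl⟩
  exact Submodule.finiteDimensional_of_le this

lemma FinRank.zero' {E : Type*} [NormedAddCommGroup E] [NormedSpace ℂ E] :
    FinRank (0 : E →L[ℂ] E) := by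
  unfold FinRank
  have : LinearMap.range ((0 : E →L[ℂ] E) : E →ₗ[ℂ] E) = ⊥ := by
    ext x; simp
  rw [this]; infer_instance

lemma FinRank.smul' {E : Type*} [NormedAddCommGroup E] [NormedSpace ℂ E]
    {F : E →L[ℂ] E} (hF : FinRank F) (c : ℂ) : FinRank (c • F) := by
  have := hF.mul_left' (c • 1)
  simpa using this

lemma circle_zero {E : Type*} [NormedAddCommGroup E] [NormedSpace ℂ E] [CompleteSpace E]
    {f : ℂ → E} {z0 : ℂ} {r r0 : ℝ} (hr : 0 < r) (hr0 : r < r0)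
    (hf : DifferentiableOn ℂ f (Metric.ball z0 r0)) : (∮ z in C(z0, r), f z) = 0 := by
  apply DiffContOnCl.circleIntegral_eq_zero hr.le
  apply DifferentiableOn.diffContOnCl
  exact hf.mono (Metric.closure_ball_subset_closedBall.trans (Metric.closedBall_subset_ball hr0))

lemma circle_mul {E : Type*} [NormedAddCommGroup E] [NormedSpace ℂ E] [CompleteSpace E]
    (C : E →L[ℂ] E) {h : ℂ → E →L[ℂ] E} {z0 : ℂ} {r : ℝ} (hh : CircleIntegrable h z0 r) :
    (∮ z in C(z0, r), C * h z) = C * ∮ z in C(z0, r), h z := by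
  have := (ContinuousLinearMap.mul ℂ (E →L[ℂ] E) C).intervalIntegral_comp_comm hh.out
  simp only [circleIntegral]
  simpa using this

lemma finRank_circle {E : Type*} [NormedAddCommGroup E] [NormedSpace ℂ E] [CompleteSpace E]
    {F : E →L[ℂ] E} (hF : FinRank F) {z0 : ℂ} {r r0 : ℝ} (hr : 0 < r) (hr0 : r < r0)
    {Z : ℂ → E →L[ℂ] E} (hZ : DifferentiableOn ℂ Z (Metric.ball z0 r0)) (n : ℕ) :
    ∀ X : ℂ → E →L[ℂ] E, DifferentiableOn ℂ X (Metric.ball z0 r0) →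
    CircleIntegrable (fun z => ((z - z0) ^ n)⁻¹ • (X z * F * Z z)) z0 r ∧
      FinRank (∮ z in C(z0, r), ((z - z0) ^ n)⁻¹ • (X z * F * Z z)) := by
  have hsub : Metric.sphere z0 r ⊆ Metric.ball z0 r0 :=
    Metric.sphere_subset_closedBall.trans (Metric.closedBall_subset_ball hr0)
  have hne : ∀ z ∈ Metric.sphere z0 r, z - z0 ≠ 0 := by
    intro z hz h0
    rw [mem_sphere_iff_norm, h0, norm_zero] at hz
    exact hr.ne hz
  have hint : ∀ (n : ℕ) (W : ℂ → E →L[ℂ] E), DifferentiableOn ℂ W (Metric.ball z0 r0) →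
      CircleIntegrable (fun z => ((z - z0) ^ n)⁻¹ • W z) z0 r := by
    intro n W hW
    apply ContinuousOn.circleIntegrable hr.le
    refine ContinuousOn.fun_smul ?_ (hW.continuousOn.mono hsub)
    apply ContinuousOn.inv₀ (by fun_prop)
    intro z hz
    exact pow_ne_zero _ (hne z hz)
  induction n with
  | zero =>
    intro X hX
    refine ⟨hint 0 _ ((hX.mul_const F).mul hZ), ?_⟩
    have : (∮ z in C(z0, r), ((z - z0) ^ 0)⁻¹ • (X z * F * Z z)) = 0 := by
      simp only [pow_zero, inv_one, one_smul]
      exact circle_zero hr hr0 ((hX.mul_const F).mul hZ)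
    rw [this]
    exact FinRank.zero'
  | succ n ih =>
    intro X hX
    refine ⟨hint _ _ ((hX.mul_const F).mul hZ), ?_⟩
    have hD : DifferentiableOn ℂ (dslope X z0) (Metric.ball z0 r0) :=
      (Complex.differentiableOn_dslope (Metric.ball_mem_nhds z0 (hr.trans hr0))).2 hX
    obtain ⟨h1, h2⟩ := ih _ hD
    have hi := hint (n + 1) Z hZ
    have key : (∮ z in C(z0, r), ((z - z0) ^ (n + 1))⁻¹ • (X z * F * Z z)) =
        (∮ z in C(z0, r), (X z0 * F) * (((z - z0) ^ (n + 1))⁻¹ • Z z)) +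
        ∮ z in C(z0, r), ((z - z0) ^ n)⁻¹ • (dslope X z0 z * F * Z z) := by
      rw [← circleIntegral.integral_add _ h1]
      · apply circleIntegral.integral_congr hr.le
        intro z hz
        have hx : X z = X z0 + (z - z0) • dslope X z0 z := by
          rw [sub_smul_dslope]; abel
        have h0 := hne z hz
        have h3 : ((z - z0) ^ (n + 1))⁻¹ * (z - z0) = ((z - z0) ^ n)⁻¹ := by
          rw [pow_succ, mul_inv, mul_assoc, inv_mul_cancel₀ h0, mul_one]
        simp only
        rw [← h3]
        nth_rewrite 1 [hx]
        simp only [add_mul, smul_mul_assoc, mul_smul_comm, smul_add, smul_smul]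
      · have := hint (n + 1) (fun z => X z0 * F * Z z) (hZ.const_mul _)
        simpa only [mul_smul_comm] using this
    rw [key, circle_mul _ hi]
    exact ((hF.mul_left' _).mul_right' _).add' h2

lemma isPreconnected_norm_gt {δ : ℝ} (hδ : 0 < δ) : IsPreconnected {z : ℂ | δ < ‖z‖} := by
  have h : {z : ℂ | δ < ‖z‖} = Complex.exp '' {w : ℂ | Real.log δ < w.re} := by
    ext z
    simp only [Set.mem_ofPred_eq, Set.mem_image]
    constructor
    · intro hz
      have hz0 : z ≠ 0 := norm_pos_iff.1 (hδ.trans hz)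
      refine ⟨Complex.log z, ?_, Complex.exp_log hz0⟩
      rw [Complex.log_re]
      exact Real.log_lt_log hδ hz
    · rintro ⟨w, hw, rfl⟩
      rw [Complex.norm_exp]
      exact (Real.log_lt_iff_lt_exp hδ).1 hw
  rw [h]
  apply IsPreconnected.image _ _ Complex.continuous_exp.continuousOn
  exact (convex_halfSpace_re_gt _).isPreconnected

/-- Analytic Fredholm in determinant form. -/
lemma fredholm_det {E : Type*} [NormedAddCommGroup E] [NormedSpace ℂ E]
    {F : E →L[ℂ] E} (hF : FinRank F) {U : Set ℂ} (A B : ℂ → E →L[ℂ] E)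
    (hB : DifferentiableOn ℂ B U) (hAB : ∀ z ∈ U, A z * B z = 1) (hBA : ∀ z ∈ U, B z * A z = 1) :
    ∃ (d : ℂ → ℂ) (Y : ℂ → E →L[ℂ] E), DifferentiableOn ℂ d U ∧ DifferentiableOn ℂ Y U ∧
      ∀ z ∈ U, (A z - F) * Y z = d z • 1 ∧ Y z * (A z - F) = d z • 1 ∧
        (d z = 0 → ¬ IsUnit (A z - F)) := by
  have : FiniteDimensional ℂ (LinearMap.range (F : E →ₗ[ℂ] E)) := hF
  obtain ⟨m, ι, π, hιπ⟩ : ∃ (m : ℕ) (ι : (Fin m → ℂ) →L[ℂ] E) (π : E →L[ℂ] (Fin m → ℂ)),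
      ∀ x, ι (π x) = F x := by
    let e := (Module.finBasis ℂ (LinearMap.range (F : E →ₗ[ℂ] E))).equivFunL
    refine ⟨_, (Submodule.subtypeL _) ∘L e.symm.toContinuousLinearMap,
      e.toContinuousLinearMap ∘L (F.codRestrict (LinearMap.range (F : E →ₗ[ℂ] E)) (fun x => ⟨x, rfl⟩)), ?_⟩
    intro x
    simp only [ContinuousLinearMap.comp_apply, ContinuousLinearEquiv.coe_coe,
      ContinuousLinearEquiv.symm_apply_apply]
    rfl
  let mat : ((Fin m → ℂ) →L[ℂ] (Fin m → ℂ)) → Matrix (Fin m) (Fin m) ℂ :=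
    fun f => LinearMap.toMatrix' (f : (Fin m → ℂ) →ₗ[ℂ] (Fin m → ℂ))
  let D : ℂ → Matrix (Fin m) (Fin m) ℂ := fun z => 1 - mat (π ∘L B z ∘L ι)
  have hDapp : ∀ z v, (D z).mulVec v = v - π (B z (ι v)) := by
    intro z v
    simp only [D, mat, Matrix.sub_mulVec, Matrix.one_mulVec, LinearMap.toMatrix'_mulVec]
    rfl
  have hDd : ∀ i j, DifferentiableOn ℂ (fun z => D z i j) U := by
    intro i j
    have h1 : ∀ z, D z i j = (1 : Matrix (Fin m) (Fin m) ℂ) i j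
        - (ContinuousLinearMap.proj (R := ℂ) (φ := fun _ : Fin m => ℂ) i ∘L π)
          (B z (ι (Pi.single j 1))) := by
      intro z
      simp [D, mat, LinearMap.toMatrix'_apply]
    simp only [h1]
    apply DifferentiableOn.const_sub
    apply (ContinuousLinearMap.differentiable _).comp_differentiableOn
    exact hB.clm_apply (differentiableOn_const _)
  have hdet : ∀ M : ℂ → Matrix (Fin m) (Fin m) ℂ,
      (∀ i j, DifferentiableOn ℂ (fun z => M z i j) U) →
      DifferentiableOn ℂ (fun z => (M z).det) U := by
    intro M hM
    simp only [Matrix.det_apply]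
    apply DifferentiableOn.fun_sum
    intro σ _
    apply DifferentiableOn.const_smul
    apply DifferentiableOn.fun_finsetProd
    intro i _
    exact hM _ _
  have hadj : ∀ i j, DifferentiableOn ℂ (fun z => (D z).adjugate i j) U := by
    intro i j
    simp only [Matrix.adjugate_apply]
    apply hdet
    intro k l
    by_cases hk : k = j
    · subst hk; simp
    · simpa [Matrix.updateRow_apply, hk] using hDd k l
  let L : Matrix (Fin m) (Fin m) ℂ →ₗ[ℂ] (E →L[ℂ] E) :=
    { toFun := fun C => ι ∘L (LinearMap.toContinuousLinearMap (Matrix.toLin' C)) ∘L π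
      map_add' := by intro a b; ext x; simp
      map_smul' := by intro a b; ext x; simp }
  have hLapp : ∀ C x, L C x = ι (C.mulVec (π x)) := by
    intro C x
    simp [L]
  have hLd : DifferentiableOn ℂ (fun z => L (D z).adjugate) U := by
    have h1 : ∀ C : Matrix (Fin m) (Fin m) ℂ,
        L C = ∑ i, ∑ j, C i j • L (Matrix.single i j 1) := by
      intro C
      conv_lhs => rw [Matrix.matrix_eq_sum_single C]
      simp only [map_sum, ← map_smul]
      simp
    have h2 : (fun z => L (D z).adjugate) =
        fun z => ∑ i, ∑ j, (D z).adjugate i j • L (Matrix.single i j 1) := by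
      funext z; exact h1 _
    rw [h2]
    refine DifferentiableOn.fun_sum fun i _ => DifferentiableOn.fun_sum fun j _ => ?_
    exact (hadj i j).smul_const _
  refine ⟨fun z => (D z).det, fun z => (D z).det • B z + B z * L (D z).adjugate * B z,
    hdet D hDd, ((hdet D hDd).smul hB).add ((hB.mul hLd).mul hB), ?_⟩
  intro z hz
  have hAB' : ∀ x, A z (B z x) = x := fun x => DFunLike.congr_fun (hAB z hz) x
  have hBA' : ∀ x, B z (A z x) = x := fun x => DFunLike.congr_fun (hBA z hz) x
  have e1 : ∀ v, (D z).adjugate.mulVec v - π (B z (ι ((D z).adjugate.mulVec v)))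
      = (D z).det • v := by
    intro v
    rw [← hDapp, Matrix.mulVec_mulVec, Matrix.mul_adjugate, Matrix.smul_mulVec, Matrix.one_mulVec]
  have e2 : ∀ v, (D z).adjugate.mulVec v - (D z).adjugate.mulVec (π (B z (ι v)))
      = (D z).det • v := by
    intro v
    rw [← Matrix.mulVec_sub, ← hDapp, Matrix.mulVec_mulVec, Matrix.adjugate_mul,
      Matrix.smul_mulVec, Matrix.one_mulVec]
  refine ⟨?_, ?_, ?_⟩
  · ext x
    have h := congrArg ι (e1 (π (B z x)))
    simp only [map_sub, map_smul, hιπ] at h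
    simp [hLapp, hAB', ← h]
  · ext x
    have h := congrArg (fun v => B z (ι v)) (e2 (π x))
    simp only [map_sub, map_smul, hιπ] at h
    simp [hLapp, hBA', Matrix.mulVec_sub]
    rw [h, smul_sub]
    abel
  · intro h0 hu
    obtain ⟨v, hv, hv0⟩ := Matrix.exists_mulVec_eq_zero_iff.2 h0
    rw [hDapp, sub_eq_zero] at hv0
    obtain ⟨W, hW⟩ := hu.exists_left_inv
    have hx : (A z - F) (B z (ι v)) = 0 := by
      simp only [sub_apply, hAB', ← hιπ, ← hv0, sub_self]
    have hx2 : B z (ι v) = 0 := by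
      have := DFunLike.congr_fun hW (B z (ι v))
      simpa [hx] using this.symm
    apply hv
    rw [hv0, hx2, map_zero]

/-- Theorem 3.2 / `t:sepDiscrete`: if some power `T^{t1}` of a
bounded operator `T` on a complex Banach space is a norm limit of finite-rank
operators, then `T` has a discrete spectrum away from zero: in any compact set
`K ⊆ ℂ \ {0}` the spectrum is finite, consists of isolated points of the
spectrum, and each of these is a pole of finite multiplicity, i.e. the
associated Riesz projection has finite rank for all small enough radii. -/
theorem stmt6 {E : Type*} [NormedAddCommGroup E] [NormedSpace ℂ E]
    [CompleteSpace E] (T : E →L[ℂ] E) (t1 : ℕ) (ht1 : 1 ≤ t1)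
    (hsep : ∀ ε : ℝ, 0 < ε → ∃ F : E →L[ℂ] E, FinRank F ∧ ‖T ^ t1 - F‖ ≤ ε) :
    ∀ K : Set ℂ, IsCompact K → (0 : ℂ) ∉ K →
      (spectrum ℂ T ∩ K).Finite ∧
      ∀ z0 ∈ spectrum ℂ T ∩ K,
        (∃ ε1 : ℝ, 0 < ε1 ∧ spectrum ℂ T ∩ Metric.closedBall z0 ε1 = {z0}) ∧
        ∃ ε0 : ℝ, 0 < ε0 ∧ ∀ ε1 : ℝ, 0 < ε1 → ε1 ≤ ε0 →
          FinRank (rieszProjection T z0 ε1) := by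
  intro K hK hK0
  -- the radius below which nothing happens
  obtain ⟨δ, hδ, hKδ⟩ : ∃ δ : ℝ, 0 < δ ∧ K ⊆ {z : ℂ | δ < ‖z‖} := by
    obtain ⟨δ, hδ, h⟩ := Metric.isOpen_iff.1 hK.isClosed.isOpen_compl 0 hK0
    refine ⟨δ / 2, by positivity, fun z hz => ?_⟩
    by_contra hlt
    have hlt' : ‖z‖ ≤ δ / 2 := not_lt.1 hlt
    exact h (show z ∈ Metric.ball 0 δ by rw [mem_ball_zero_iff]; linarith) hz
  set U : Set ℂ := {z : ℂ | δ < ‖z‖} with hU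
  have hUo : IsOpen U := isOpen_lt continuous_const continuous_norm
  have hres : ∀ (G : E →L[ℂ] E) (w : ℂ), ‖G‖ < ‖w‖ → w ∈ resolventSet ℂ G := by
    intro G w h
    apply spectrum.mem_resolventSet_of_norm_lt_mul
    refine lt_of_le_of_lt ?_ h
    exact mul_le_of_le_one_right (norm_nonneg _) ContinuousLinearMap.norm_id_le
  obtain ⟨F, hF, hFn⟩ := hsep (δ ^ t1 / 2) (by positivity)
  set G : E →L[ℂ] E := T ^ t1 - F with hG
  have hGU : ∀ z ∈ U, z ^ t1 ∈ resolventSet ℂ G := by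
    intro z hz
    apply hres
    rw [norm_pow]
    have h1 : δ ^ t1 ≤ ‖z‖ ^ t1 := pow_le_pow_left₀ hδ.le (le_of_lt hz) _
    have h2 : 0 < δ ^ t1 := by positivity
    linarith
  let A : ℂ → E →L[ℂ] E := fun z => algebraMap ℂ (E →L[ℂ] E) (z ^ t1) - G
  let B : ℂ → E →L[ℂ] E := fun z => resolvent G (z ^ t1)
  have hB : DifferentiableOn ℂ B U := by
    intro z hz
    have h1 := (spectrum.hasDerivAt_resolvent_const_left (hGU z hz)).differentiableAt
    exact (DifferentiableAt.comp z (g := resolvent G) (f := fun z : ℂ => z ^ t1) h1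
      (by fun_prop)).differentiableWithinAt
  have hAB : ∀ z ∈ U, A z * B z = 1 := fun z hz => Ring.mul_inverse_cancel _ (hGU z hz)
  have hBA : ∀ z ∈ U, B z * A z = 1 := fun z hz => Ring.inverse_mul_cancel _ (hGU z hz)
  have hAF : ∀ z, A z - F = algebraMap ℂ (E →L[ℂ] E) (z ^ t1) - T ^ t1 := by
    intro z
    simp only [A, hG]; abel
  obtain ⟨d, Y, hd, hY, hdY⟩ := fredholm_det hF A B hB hAB hBA
  -- the cofactor
  let Q : ℂ → E →L[ℂ] E := fun z =>
    ∑ i ∈ Finset.range t1, (algebraMap ℂ (E →L[ℂ] E) z) ^ i * T ^ (t1 - 1 - i)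
  have hcomm : ∀ z, Commute (algebraMap ℂ (E →L[ℂ] E) z) T := fun z => Algebra.commutes z T
  have hQ1 : ∀ z, Q z * (algebraMap ℂ (E →L[ℂ] E) z - T) = A z - F := by
    intro z
    rw [hAF, map_pow]
    exact (hcomm z).geom_sum₂_mul t1
  have hQ2 : ∀ z, (algebraMap ℂ (E →L[ℂ] E) z - T) * Q z = A z - F := by
    intro z
    rw [hAF, map_pow]
    exact (hcomm z).mul_geom_sum₂ t1
  have hQd : Differentiable ℂ Q := by
    have h1 : Q = fun z => ∑ i ∈ Finset.range t1, z ^ i • T ^ (t1 - 1 - i) := by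
      funext z
      simp only [Q, ← map_pow, ← Algebra.smul_def]
    rw [h1]
    fun_prop
  -- inverse off the zero set of `d`
  have hinv : ∀ z ∈ U, d z ≠ 0 → IsUnit (algebraMap ℂ (E →L[ℂ] E) z - T) ∧
      Ring.inverse (algebraMap ℂ (E →L[ℂ] E) z - T) = (d z)⁻¹ • (Q z * Y z) := by
    intro z hz h0
    obtain ⟨h1, h2, -⟩ := hdY z hz
    have e1 : (algebraMap ℂ (E →L[ℂ] E) z - T) * ((d z)⁻¹ • (Q z * Y z)) = 1 := by
      rw [mul_smul_comm, ← mul_assoc, hQ2, h1, smul_smul, inv_mul_cancel₀ h0, one_smul]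
    have e2 : ((d z)⁻¹ • (Y z * Q z)) * (algebraMap ℂ (E →L[ℂ] E) z - T) = 1 := by
      rw [smul_mul_assoc, mul_assoc, hQ1, h2, smul_smul, inv_mul_cancel₀ h0, one_smul]
    have hu : IsUnit (algebraMap ℂ (E →L[ℂ] E) z - T) :=
      isUnit_iff_exists_and_exists.2 ⟨⟨_, e1⟩, ⟨_, e2⟩⟩
    refine ⟨hu, ?_⟩
    calc _ = Ring.inverse (algebraMap ℂ (E →L[ℂ] E) z - T) *
        ((algebraMap ℂ (E →L[ℂ] E) z - T) * ((d z)⁻¹ • (Q z * Y z))) := by rw [e1, mul_one]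
      _ = _ := by rw [← mul_assoc, Ring.inverse_mul_cancel _ hu, one_mul]
  have hspec : ∀ z ∈ U, z ∈ spectrum ℂ T → d z = 0 := by
    intro z hz hzs
    by_contra h0
    exact hzs (hinv z hz h0).1
  -- `d` is not identically zero
  have hda : AnalyticOnNhd ℂ d U := hd.analyticOnNhd hUo
  have hne : ∀ z ∈ U, ∀ᶠ w in 𝓝[≠] z, d w ≠ 0 := by
    intro z hz
    by_contra hcon
    have hfr : ∃ᶠ w in 𝓝[≠] z, d w = 0 := by
      intro h; exact hcon h
    have hzero := hda.eqOn_zero_of_preconnected_of_frequently_eq_zero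
      (isPreconnected_norm_gt hδ) hz hfr
    let x : ℝ := ‖T ^ t1‖ + δ + 1
    have hx1 : 1 ≤ x := by
      have := norm_nonneg (T ^ t1); simp only [x]; linarith
    have hxn : ‖(x : ℂ)‖ = x := by
      rw [Complex.norm_real, Real.norm_eq_abs, abs_of_nonneg (by linarith)]
    have hxU : (x : ℂ) ∈ U := by
      change δ < ‖(x : ℂ)‖
      rw [hxn]
      have := norm_nonneg (T ^ t1); simp only [x]; linarith
    apply (hdY _ hxU).2.2 (hzero hxU)
    rw [hAF]
    apply hres
    rw [norm_pow (x : ℂ), hxn]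
    calc ‖T ^ t1‖ < x := by simp only [x]; linarith
      _ ≤ x ^ t1 := le_self_pow₀ hx1 (by omega)
  refine ⟨?_, ?_⟩
  · by_contra hinf
    obtain ⟨z, hzK, hacc⟩ := Set.Infinite.exists_accPt_of_subset_isCompact
      (hinf : (spectrum ℂ T ∩ K).Infinite) hK Set.inter_subset_right
    rw [accPt_iff_frequently_nhdsNE] at hacc
    apply hacc
    filter_upwards [hne z (hKδ hzK)] with w hw hmem
    exact hw (hspec w (hKδ hmem.2) hmem.1)
  rintro z0 ⟨hz0s, hz0K⟩
  have hz0U := hKδ hz0K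
  have hne0 := hne z0 hz0U
  refine ⟨?_, ?_⟩
  · have h1 : ∀ᶠ w in 𝓝 z0, w ∈ U ∧ (w ≠ z0 → d w ≠ 0) :=
      (hUo.eventually_mem hz0U).and (eventually_nhdsWithin_iff.1 hne0)
    obtain ⟨r, hr, h⟩ := Metric.nhds_basis_closedBall.eventually_iff.1 h1
    refine ⟨r, hr, ?_⟩
    apply Set.Subset.antisymm
    · rintro w ⟨hws, hwb⟩
      by_contra hw
      exact (h hwb).2 hw (hspec w (h hwb).1 hws)
    · rintro w rfl
      exact ⟨hz0s, Metric.mem_closedBall_self hr.le⟩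
  · have hnz : ¬ ∀ᶠ z in 𝓝 z0, d z = 0 := by
      intro h
      obtain ⟨w, hw⟩ := (hne0.and (h.filter_mono nhdsWithin_le_nhds)).exists
      exact hw.1 hw.2
    obtain ⟨n, g, hg, hg0, hdg⟩ :=
      (hda z0 hz0U).exists_eventuallyEq_pow_smul_nonzero_iff.2 hnz
    have hall : ∀ᶠ z in 𝓝 z0, z ∈ U ∧ d z = (z - z0) ^ n • g z ∧ DifferentiableAt ℂ g z ∧
        g z ≠ 0 :=
      (hUo.eventually_mem hz0U).and (hdg.and
        ((hg.eventually_analyticAt.mono fun _ h => h.differentiableAt).and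
          (hg.continuousAt.eventually_ne hg0)))
    obtain ⟨r0, hr0, h⟩ := Metric.nhds_basis_ball.eventually_iff.1 hall
    refine ⟨r0 / 2, by positivity, fun r hr hrr => ?_⟩
    have hrr0 : r < r0 := by linarith
    have hbU : Metric.ball z0 r0 ⊆ U := fun z hz => (h hz).1
    have hX : DifferentiableOn ℂ (fun z => Q z * B z) (Metric.ball z0 r0) :=
      hQd.differentiableOn.mul (hB.mono hbU)
    have hZ : DifferentiableOn ℂ (fun z => (g z)⁻¹ • Y z) (Metric.ball z0 r0) := by
      refine DifferentiableOn.fun_smul (fun z hz => ?_) (hY.mono hbU)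
      exact ((h hz).2.2.1.inv (h hz).2.2.2).differentiableWithinAt
    obtain ⟨hi, hfin⟩ := finRank_circle hF hr hrr0 hZ n _ hX
    have hsub : Metric.sphere z0 r ⊆ Metric.ball z0 r0 :=
      Metric.sphere_subset_closedBall.trans (Metric.closedBall_subset_ball hrr0)
    have key : (∮ z in C(z0, r), Ring.inverse (algebraMap ℂ (E →L[ℂ] E) z - T)) =
        (∮ z in C(z0, r), Q z * B z) +
          ∮ z in C(z0, r), ((z - z0) ^ n)⁻¹ • (Q z * B z * F * ((g z)⁻¹ • Y z)) := by
      rw [← circleIntegral.integral_add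
        ((hX.continuousOn.mono hsub).circleIntegrable hr.le) hi]
      apply circleIntegral.integral_congr hr.le
      intro z hz
      obtain ⟨hzU, hzd, -, hgz⟩ := h (hsub hz)
      have hzz : z - z0 ≠ 0 := by
        intro h0
        rw [mem_sphere_iff_norm, h0, norm_zero] at hz
        exact hr.ne hz
      have hd0 : d z ≠ 0 := by
        rw [hzd]
        exact smul_ne_zero (pow_ne_zero _ hzz) hgz
      have hYB : Y z = d z • B z + B z * F * Y z := by
        have h1 := congrArg (fun W => B z * W) (hdY z hzU).1
        simp only [sub_mul, mul_sub, mul_smul_comm, mul_one] at h1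
        rw [← mul_assoc, hBA z hzU, one_mul, ← mul_assoc] at h1
        rw [← h1]; abel
      simp only
      rw [(hinv z hzU hd0).2]
      nth_rewrite 1 [hYB]
      rw [mul_add, smul_add, mul_smul_comm, smul_smul, inv_mul_cancel₀ hd0, one_smul,
        mul_smul_comm, smul_smul, hzd, smul_eq_mul, mul_inv]
      simp only [mul_assoc]
    unfold rieszProjection
    rw [key, circle_zero hr hrr0 hX, zero_add]
    exact hfin.smul' _

end
end

section
/- Let N ≥ 1 and let φ : [0,1]^N → ℝ be continuously differentiable. For m ≥ 1 define the multivariate Bernstein polynomial φ_m(z) = Σ_{j_1=0}^m ⋯ Σ_{j_N=0}^m φ(j_1/m, …, j_N/m) ∏_{i=1}^N binom(m, j_i) z_i^{j_i} (1 − z_i)^{m − j_i}. Then φ_m → φ uniformly on [0,1]^N together with its first partial derivatives: lim_{m→∞} sup_{z∈[0,1]^N} |φ(z) − φ_m(z)| = 0 and, for every 1 ≤ i ≤ N, lim_{m→∞} sup_{z∈[0,1]^N} |∂φ/∂z_i (z) − ∂φ_m/∂z_i (z)| = 0. -/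
noncomputable section

/-- The multivariate Bernstein polynomial of order `m` associated with
`φ : [0,1]^N → ℝ`:
`φ_m(z) = Σ_{j} φ(j/m) ∏_i C(m, j_i) z_i^{j_i} (1 − z_i)^{m − j_i}`. -/
noncomputable def bernstein' {N : ℕ} (φ : (Fin N → ℝ) → ℝ) (m : ℕ)
    (z : Fin N → ℝ) : ℝ :=
  ∑ j : Fin N → Fin (m + 1),
    φ (fun i => ((j i : ℕ) : ℝ) / (m : ℝ)) *
      ∏ i, (m.choose (j i) : ℝ) * z i ^ (j i : ℕ) * (1 - z i) ^ (m - (j i : ℕ))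

/-- The unit cube `[0,1]^N`. -/
def unitCube (N : ℕ) : Set (Fin N → ℝ) :=
  Set.pi Set.univ fun _ : Fin N => Set.Icc (0 : ℝ) 1

open Filter Topology

/-- One-variable Bernstein basis function. -/
def bb (n k : ℕ) (x : ℝ) : ℝ := (n.choose k : ℝ) * x ^ k * (1 - x) ^ (n - k)

lemma bb_eq (n k : ℕ) (x : ℝ) : bb n k x = (bernsteinPolynomial ℝ n k).eval x := by
  simp [bb, bernsteinPolynomial]

lemma bb_nonneg (n k : ℕ) {x : ℝ} (hx : x ∈ Set.Icc (0 : ℝ) 1) : 0 ≤ bb n k x := by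
  have h1 := hx.1
  have h2 : 0 ≤ 1 - x := by linarith [hx.2]
  unfold bb
  positivity

lemma bb_sum (n : ℕ) (x : ℝ) : ∑ k : Fin (n + 1), bb n k x = 1 := by
  have := congrArg (Polynomial.eval x) (bernsteinPolynomial.sum ℝ n)
  rw [Polynomial.eval_finsetSum] at this
  simpa [Finset.sum_range, bb_eq] using this

lemma bb_var {n : ℕ} (hn : n ≠ 0) {x : ℝ} (hx : x ∈ Set.Icc (0 : ℝ) 1) :
    ∑ k : Fin (n + 1), bb n k x * ((k : ℕ) / (n : ℝ) - x) ^ 2 ≤ 1 / n := by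
  have h := bernstein.variance hn ⟨x, hx⟩
  have h2 : ∑ k : Fin (n + 1), bb n k x * ((k : ℕ) / (n : ℝ) - x) ^ 2 = x * (1 - x) / n := by
    rw [← h]
    refine Finset.sum_congr rfl fun k _ => ?_
    rw [bernstein_apply]
    simp only [bernstein.z, bb]
    ring
  rw [h2]
  have h1 := hx.1
  have h3 := hx.2
  gcongr
  nlinarith

lemma bb_hasDerivAt (M : ℕ) (a : ℕ → ℝ) (x : ℝ) :
    HasDerivAt (fun t => ∑ k : Fin (M + 1 + 1), a k * bb (M + 1) k t)
      (∑ k : Fin (M + 1), ((M + 1 : ℕ) : ℝ) * (a (k + 1) - a k) * bb M k x) x := by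
  have h1 : HasDerivAt (fun t => ∑ k : Fin (M + 1 + 1), a k * bb (M + 1) k t)
      (∑ k : Fin (M + 1 + 1), a k * (bernsteinPolynomial ℝ (M + 1) k).derivative.eval x) x := by
    refine HasDerivAt.fun_sum fun k _ => ?_
    have e : bb (M + 1) k = fun t => (bernsteinPolynomial ℝ (M + 1) k).eval t :=
      funext (bb_eq _ _)
    rw [e]
    exact (Polynomial.hasDerivAt _ x).const_mul _
  convert h1 using 1
  rw [← Finset.sum_range (fun k => a k * (bernsteinPolynomial ℝ (M + 1) k).derivative.eval x),
    ← Finset.sum_range (fun k => ((M + 1 : ℕ) : ℝ) * (a (k + 1) - a k) * bb M k x)]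
  rw [Finset.sum_range_succ'
    (fun k => a k * (bernsteinPolynomial ℝ (M + 1) k).derivative.eval x)]
  simp only [bernsteinPolynomial.derivative_succ, bernsteinPolynomial.derivative_zero]
  simp only [Polynomial.eval_mul, Polynomial.eval_sub, Polynomial.eval_neg,
    Polynomial.eval_natCast, Nat.add_sub_cancel, ← bb_eq]
  have key : ∑ k ∈ Finset.range (M + 1), a (k + 1) * bb M (k + 1) x + a 0 * bb M 0 x
      = ∑ k ∈ Finset.range (M + 1), a k * bb M k x := by
    rw [← Finset.sum_range_succ' (fun k => a k * bb M k x), Finset.sum_range_succ]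
    simp [bb]
  have e1 : ∑ k ∈ Finset.range (M + 1), ((M + 1 : ℕ) : ℝ) * (a (k + 1) - a k) * bb M k x
      = ((M + 1 : ℕ) : ℝ) * (∑ k ∈ Finset.range (M + 1), a (k + 1) * bb M k x
        - ∑ k ∈ Finset.range (M + 1), a k * bb M k x) := by
    rw [← Finset.sum_sub_distrib, Finset.mul_sum]
    refine Finset.sum_congr rfl fun k _ => ?_
    ring
  have e2 : ∑ k ∈ Finset.range (M + 1),
        a (k + 1) * (((M + 1 : ℕ) : ℝ) * (bb M k x - bb M (k + 1) x))
      = ((M + 1 : ℕ) : ℝ) * (∑ k ∈ Finset.range (M + 1), a (k + 1) * bb M k x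
        - ∑ k ∈ Finset.range (M + 1), a (k + 1) * bb M (k + 1) x) := by
    rw [← Finset.sum_sub_distrib, Finset.mul_sum]
    refine Finset.sum_congr rfl fun k _ => ?_
    ring
  rw [e1, e2, ← key]
  ring

lemma prod_sum_one {N n : ℕ} (z : Fin N → ℝ) :
    ∑ j : Fin N → Fin (n + 1), ∏ l, bb n (j l) (z l) = 1 := by
  have := Finset.prod_univ_sum (fun _ : Fin N => (Finset.univ : Finset (Fin (n + 1))))
    (fun l k => bb n k (z l))
  rw [Fintype.piFinset_univ] at this
  rw [← this]
  simp [bb_sum]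

lemma prod_sum_single {N n : ℕ} (z : Fin N → ℝ) (i : Fin N) (h : Fin (n + 1) → ℝ) :
    ∑ j : Fin N → Fin (n + 1), (∏ l, bb n (j l) (z l)) * h (j i)
      = ∑ k : Fin (n + 1), bb n k (z i) * h k := by
  have := Finset.prod_univ_sum (fun _ : Fin N => (Finset.univ : Finset (Fin (n + 1))))
    (fun l k => bb n k (z l) * (if l = i then h k else 1))
  rw [Fintype.piFinset_univ] at this
  simp only [Finset.prod_mul_distrib] at this
  simp only [Finset.prod_ite_eq', Finset.mem_univ, if_true] at this
  rw [← this, Finset.prod_eq_single i]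
  · simp
  · intro l _ hl
    simp [hl, bb_sum]
  · simp

lemma prod_var {N n : ℕ} (hn : n ≠ 0) (z : Fin N → ℝ) (hz : ∀ l, z l ∈ Set.Icc (0 : ℝ) 1) :
    ∑ j : Fin N → Fin (n + 1), (∏ l, bb n (j l) (z l)) *
      ∑ l, ((j l : ℕ) / (n : ℝ) - z l) ^ 2 ≤ N / n := by
  simp only [Finset.mul_sum]
  rw [Finset.sum_comm]
  calc _ ≤ ∑ l : Fin N, 1 / (n : ℝ) := by
        refine Finset.sum_le_sum fun l _ => ?_
        rw [prod_sum_single z l (fun k => ((k : ℕ) / (n : ℝ) - z l) ^ 2)]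
        exact bb_var hn (hz l)
    _ = N / n := by simp [div_eq_mul_inv]

lemma avg_bound {Ω : Type*} [Fintype Ω] (p F Q : Ω → ℝ) (c η K v : ℝ) (hp : ∀ o, 0 ≤ p o)
    (hs : ∑ o, p o = 1) (hK : 0 ≤ K) (hF : ∀ o, |c - F o| ≤ η + K * Q o)
    (hQ : ∑ o, p o * Q o ≤ v) : |c - ∑ o, F o * p o| ≤ η + K * v := by
  have e : c - ∑ o, F o * p o = ∑ o, (c - F o) * p o := by
    simp only [sub_mul, Finset.sum_sub_distrib, ← Finset.mul_sum, hs, mul_one]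
  rw [e]
  calc _ ≤ ∑ o, |(c - F o) * p o| := Finset.abs_sum_le_sum_abs _ _
    _ ≤ ∑ o, (η + K * Q o) * p o := by
        refine Finset.sum_le_sum fun o _ => ?_
        rw [abs_mul, abs_of_nonneg (hp o)]
        exact mul_le_mul_of_nonneg_right (hF o) (hp o)
    _ = η * ∑ o, p o + K * ∑ o, p o * Q o := by
        rw [Finset.mul_sum, Finset.mul_sum, ← Finset.sum_add_distrib]
        refine Finset.sum_congr rfl fun k _ => ?_
        ring
    _ ≤ η + K * v := by
        rw [hs, mul_one]
        gcongr

lemma modulus {N : ℕ} (g : (Fin N → ℝ) → ℝ) (hg : ContinuousOn g (unitCube N)) (η : ℝ)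
    (hη : 0 < η) : ∃ δ > 0, ∃ K ≥ 0, ∀ x ∈ unitCube N, ∀ y ∈ unitCube N,
      ((∀ l, |x l - y l| < δ) → |g x - g y| ≤ η) ∧
      |g x - g y| ≤ η + K * ∑ l, (y l - x l) ^ 2 := by
  have hc : IsCompact (unitCube N) := isCompact_univ_pi fun _ => isCompact_Icc
  have hu := hc.uniformContinuousOn_of_continuous hg
  rw [Metric.uniformContinuousOn_iff] at hu
  obtain ⟨δ, hδ, hu⟩ := hu η hη
  obtain ⟨C, hC⟩ := hc.exists_bound_of_continuousOn hg
  have h1 : ∀ x ∈ unitCube N, ∀ y ∈ unitCube N,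
      ((∀ l, |x l - y l| < δ) → |g x - g y| ≤ η) := by
    intro x hx y hy h
    refine (hu x hx y hy ?_).le
    rw [dist_pi_lt_iff hδ]
    exact h
  refine ⟨δ, hδ, 2 * |C| / δ ^ 2, by positivity, fun x hx y hy => ⟨h1 x hx y hy, ?_⟩⟩
  have hS : 0 ≤ ∑ l, (y l - x l) ^ 2 := Finset.sum_nonneg fun _ _ => sq_nonneg _
  by_cases h : ∀ l, |x l - y l| < δ
  · have := h1 x hx y hy h
    have : 0 ≤ 2 * |C| / δ ^ 2 * ∑ l, (y l - x l) ^ 2 := by positivity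
    linarith
  · push Not at h
    obtain ⟨l, hl⟩ := h
    have h2 : δ ^ 2 ≤ ∑ l, (y l - x l) ^ 2 := by
      calc δ ^ 2 ≤ |x l - y l| ^ 2 := by gcongr
        _ = (y l - x l) ^ 2 := by rw [sq_abs]; ring
        _ ≤ _ := Finset.single_le_sum (f := fun l => (y l - x l) ^ 2)
          (fun _ _ => sq_nonneg _) (Finset.mem_univ l)
    have h3 : 2 * |C| ≤ 2 * |C| / δ ^ 2 * ∑ l, (y l - x l) ^ 2 := by
      calc 2 * |C| = 2 * |C| / δ ^ 2 * δ ^ 2 := by field_simp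
        _ ≤ _ := by gcongr
    have h4 := abs_sub (g x) (g y)
    have h5 := hC x hx
    have h6 := hC y hy
    rw [Real.norm_eq_abs] at h5 h6
    linarith [le_abs_self C]

lemma ratio_mem {n k : ℕ} (h : k ≤ n) : (k : ℝ) / n ∈ Set.Icc (0 : ℝ) 1 := by
  refine ⟨by positivity, ?_⟩
  apply div_le_one_of_le₀ _ (by positivity)
  exact_mod_cast h

lemma unif_part {N : ℕ} (φ : (Fin N → ℝ) → ℝ) (hφ : ContinuousOn φ (unitCube N)) (ε : ℝ)
    (hε : 0 < ε) : ∀ᶠ m : ℕ in atTop, ∀ z ∈ unitCube N, |φ z - bernstein' φ m z| ≤ ε := by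
  obtain ⟨δ, hδ, K, hK, h⟩ := modulus φ hφ (ε / 2) (by positivity)
  have ht := tendsto_const_div_atTop_nhds_zero_nat (K * N)
  filter_upwards [ht.eventually_lt_const (half_pos hε), eventually_ne_atTop 0] with m hm hm0 z hz
  have hz' : ∀ l, z l ∈ Set.Icc (0 : ℝ) 1 := fun l => hz l (Set.mem_univ l)
  have := avg_bound (fun j : Fin N → Fin (m + 1) => ∏ l, bb m (j l) (z l))
    (fun j => φ (fun i => ((j i : ℕ) : ℝ) / (m : ℝ)))
    (fun j => ∑ l, ((j l : ℕ) / (m : ℝ) - z l) ^ 2) (φ z) (ε / 2) K (N / m)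
    (fun j => Finset.prod_nonneg fun l _ => bb_nonneg _ _ (hz' l)) (prod_sum_one z) hK
    (fun j => (h z hz _ fun l _ => ratio_mem (Nat.lt_succ_iff.1 (j l).2)).2) (prod_var hm0 z hz')
  refine this.trans ?_
  rw [mul_div_assoc] at hm
  linarith

lemma partial_eq {N : ℕ} (f : (Fin N → ℝ) → ℝ) (z : Fin N → ℝ) (i : Fin N) (t : ℝ)
    (hf : DifferentiableAt ℝ f (Function.update z i t)) :
    HasDerivAt (fun s => f (Function.update z i s))
      (fderiv ℝ f (Function.update z i t) (Pi.single i 1)) t :=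
  hf.hasFDerivAt.comp_hasDerivAt t (hasDerivAt_update z i t)

lemma bern_diff {N : ℕ} (φ : (Fin N → ℝ) → ℝ) (m : ℕ) : Differentiable ℝ (bernstein' φ m) := by
  unfold bernstein'
  fun_prop

lemma bern_split {N : ℕ} (φ : (Fin (N + 1) → ℝ) → ℝ) (m : ℕ) (i : Fin (N + 1))
    (z : Fin (N + 1) → ℝ) (t : ℝ) :
    bernstein' φ m (Function.update z i t) = ∑ k : Fin (m + 1),
      (∑ j : Fin N → Fin (m + 1), φ (i.insertNth ((k : ℕ) / (m : ℝ))
        (fun l => ((j l : ℕ) : ℝ) / (m : ℝ))) * ∏ l, bb m (j l) (z (i.succAbove l)))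
        * bb m k t := by
  unfold bernstein'
  rw [← (Fin.insertNthEquiv (fun _ => Fin (m + 1)) i).sum_comp, Fintype.sum_prod_type]
  refine Finset.sum_congr rfl fun k _ => ?_
  rw [Finset.sum_mul]
  refine Finset.sum_congr rfl fun j _ => ?_
  rw [Fin.prod_univ_succAbove _ i]
  simp only [Fin.insertNthEquiv_apply, Fin.insertNth_apply_same, Fin.insertNth_apply_succAbove,
    Function.update_self, ne_eq, Fin.succAbove_ne, not_false_eq_true, Function.update_of_ne]
  have : (fun l => (((i.insertNth k j : Fin (N + 1) → Fin (m + 1)) l : ℕ) : ℝ) / (m : ℝ))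
      = (i.insertNth ((k : ℕ) / (m : ℝ)) (fun l => ((j l : ℕ) : ℝ) / (m : ℝ))
        : Fin (N + 1) → ℝ) := by
    rw [Fin.eq_insertNth_iff]
    constructor
    · simp
    · ext l
      simp [Fin.removeNth]
  rw [this]
  simp only [bb]
  ring

lemma deriv_formula {N : ℕ} (φ : (Fin (N + 1) → ℝ) → ℝ) (M : ℕ) (i : Fin (N + 1))
    (z : Fin (N + 1) → ℝ) :
    fderiv ℝ (bernstein' φ (M + 1)) z (Pi.single i 1) =
      ∑ o : Fin (M + 1) × (Fin N → Fin (M + 1 + 1)),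
        (((M + 1 : ℕ) : ℝ) * (φ (i.insertNth (((o.1 : ℕ) + 1 : ℕ) / ((M + 1 : ℕ) : ℝ))
          (fun l => ((o.2 l : ℕ) : ℝ) / ((M + 1 : ℕ) : ℝ)))
          - φ (i.insertNth ((o.1 : ℕ) / ((M + 1 : ℕ) : ℝ))
          (fun l => ((o.2 l : ℕ) : ℝ) / ((M + 1 : ℕ) : ℝ))))) *
        (bb M o.1 (z i) * ∏ l, bb (M + 1) (o.2 l) (z (i.succAbove l))) := by
  have h1 := partial_eq (bernstein' φ (M + 1)) z i (z i) (bern_diff _ _ _)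
  rw [Function.update_eq_self] at h1
  simp only [bern_split] at h1
  have h2 := bb_hasDerivAt M (fun k => ∑ j : Fin N → Fin (M + 1 + 1),
    φ (i.insertNth ((k : ℕ) / ((M + 1 : ℕ) : ℝ))
        (fun l => ((j l : ℕ) : ℝ) / ((M + 1 : ℕ) : ℝ))) *
      ∏ l, bb (M + 1) (j l) (z (i.succAbove l))) (z i)
  rw [h1.unique h2, Fintype.sum_prod_type]
  refine Finset.sum_congr rfl fun k _ => ?_
  rw [← Finset.sum_sub_distrib, Finset.mul_sum, Finset.sum_mul]
  refine Finset.sum_congr rfl fun j _ => ?_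
  ring

lemma insert_mem {N : ℕ} (i : Fin (N + 1)) (t : ℝ) (y : Fin N → ℝ)
    (ht : t ∈ Set.Icc (0 : ℝ) 1) (hy : ∀ l, y l ∈ Set.Icc (0 : ℝ) 1) :
    (i.insertNth t y : Fin (N + 1) → ℝ) ∈ unitCube (N + 1) := by
  intro l _
  rcases Fin.eq_self_or_eq_succAbove i l with rfl | ⟨l, rfl⟩
  · simpa using ht
  · simpa using hy l

lemma mvt_part {N : ℕ} (φ : (Fin (N + 1) → ℝ) → ℝ)
    (hd : ∀ z ∈ unitCube (N + 1), DifferentiableAt ℝ φ z) (M k : ℕ) (hk : k ≤ M)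
    (i : Fin (N + 1)) (y : Fin N → ℝ) (hy : ∀ l, y l ∈ Set.Icc (0 : ℝ) 1) :
    ∃ ξ ∈ Set.Icc (0 : ℝ) 1, |ξ - (k : ℝ) / M| ≤ 1 / ((M + 1 : ℕ) : ℝ) ∧
      ((M + 1 : ℕ) : ℝ) * (φ (i.insertNth ((k + 1 : ℕ) / ((M + 1 : ℕ) : ℝ)) y)
          - φ (i.insertNth (k / ((M + 1 : ℕ) : ℝ)) y)) =
      fderiv ℝ φ (i.insertNth ξ y) (Pi.single i 1) := by
  have hM : (0 : ℝ) < ((M + 1 : ℕ) : ℝ) := by positivity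
  have hlt : (k : ℝ) / ((M + 1 : ℕ) : ℝ) < (k + 1 : ℕ) / ((M + 1 : ℕ) : ℝ) := by
    gcongr
    simp
  have h0 : (0 : ℝ) ≤ (k : ℝ) / ((M + 1 : ℕ) : ℝ) := by positivity
  have h1 : ((k + 1 : ℕ) : ℝ) / ((M + 1 : ℕ) : ℝ) ≤ 1 := (ratio_mem (by omega)).2
  have hder : ∀ t ∈ Set.Icc (0 : ℝ) 1, HasDerivAt (fun s => φ (i.insertNth s y))
      (fderiv ℝ φ (i.insertNth t y) (Pi.single i 1)) t := by
    intro t ht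
    have e : ∀ s : ℝ, Function.update (i.insertNth 0 y : Fin (N + 1) → ℝ) i s
        = i.insertNth s y := fun s => by simp
    have := partial_eq φ (i.insertNth 0 y) i t
    simp only [e] at this
    exact this (hd _ (insert_mem i t y ht hy))
  obtain ⟨ξ, hξ, he⟩ := exists_hasDerivAt_eq_slope (fun s => φ (i.insertNth s y))
    (fun t => fderiv ℝ φ (i.insertNth t y) (Pi.single i 1)) hlt
    (fun t ht => (hder t ⟨h0.trans ht.1, ht.2.trans h1⟩).continuousAt.continuousWithinAt)
    (fun t ht => hder t ⟨h0.trans ht.1.le, ht.2.le.trans h1⟩)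
  refine ⟨ξ, ⟨h0.trans hξ.1.le, hξ.2.le.trans h1⟩, ?_, ?_⟩
  · have hkM : (k : ℝ) ≤ M := by exact_mod_cast hk
    have a1 : (k : ℝ) / ((M + 1 : ℕ) : ℝ) ≤ (k : ℝ) / M := by
      rcases Nat.eq_zero_or_pos M with rfl | hp
      · have : k = 0 := by omega
        simp [this]
      · have : (0 : ℝ) < M := by exact_mod_cast hp
        gcongr
        omega
    have a2 : (k : ℝ) / M ≤ (k + 1 : ℕ) / ((M + 1 : ℕ) : ℝ) := by
      rcases Nat.eq_zero_or_pos M with rfl | hp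
      · simp
        positivity
      · have : (0 : ℝ) < M := by exact_mod_cast hp
        rw [div_le_div_iff₀ this hM]
        push_cast
        nlinarith
    have a3 : ((k + 1 : ℕ) : ℝ) / ((M + 1 : ℕ) : ℝ)
        = (k : ℝ) / ((M + 1 : ℕ) : ℝ) + 1 / ((M + 1 : ℕ) : ℝ) := by
      rw [← add_div]
      push_cast
      rfl
    rw [abs_le]
    constructor <;> linarith [hξ.1, hξ.2]
  · rw [he]
    have : ((k + 1 : ℕ) : ℝ) / ((M + 1 : ℕ) : ℝ) - (k : ℝ) / ((M + 1 : ℕ) : ℝ)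
        = 1 / ((M + 1 : ℕ) : ℝ) := by
      rw [← sub_div]
      push_cast
      ring
    rw [this]
    field_simp

lemma deriv_part {N : ℕ} (φ : (Fin (N + 1) → ℝ) → ℝ)
    (hd : ∀ z ∈ unitCube (N + 1), DifferentiableAt ℝ φ z) (i : Fin (N + 1))
    (hg : ContinuousOn (fun z => fderiv ℝ φ z (Pi.single i 1)) (unitCube (N + 1))) (ε : ℝ)
    (hε : 0 < ε) : ∀ᶠ m : ℕ in atTop, ∀ z ∈ unitCube (N + 1),
      |fderiv ℝ φ z (Pi.single i 1) - fderiv ℝ (bernstein' φ m) z (Pi.single i 1)| ≤ ε := by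
  rw [← map_add_atTop_eq_nat 1, eventually_map]
  obtain ⟨δ, hδ, K, hK, h⟩ := modulus _ hg (ε / 3) (by positivity)
  have ht := tendsto_const_div_atTop_nhds_zero_nat (K * (N + 1))
  have ht2 := tendsto_one_div_add_atTop_nhds_zero_nat (𝕜 := ℝ)
  filter_upwards [ht.eventually_lt_const (show (0 : ℝ) < ε / 3 by positivity),
    ht2.eventually_lt_const hδ, eventually_ne_atTop 0] with M hm hm2 hm0 z hz
  have hz' : ∀ l, z l ∈ Set.Icc (0 : ℝ) 1 := fun l => hz l (Set.mem_univ l)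
  rw [deriv_formula]
  have hMpos : (0 : ℝ) < M := by
    have := Nat.pos_of_ne_zero hm0
    exact_mod_cast this
  have key := avg_bound
    (fun o : Fin (M + 1) × (Fin N → Fin (M + 1 + 1)) =>
      bb M o.1 (z i) * ∏ l, bb (M + 1) (o.2 l) (z (i.succAbove l)))
    (fun o => ((M + 1 : ℕ) : ℝ) * (φ (i.insertNth (((o.1 : ℕ) + 1 : ℕ) / ((M + 1 : ℕ) : ℝ))
          (fun l => ((o.2 l : ℕ) : ℝ) / ((M + 1 : ℕ) : ℝ)))
          - φ (i.insertNth ((o.1 : ℕ) / ((M + 1 : ℕ) : ℝ))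
          (fun l => ((o.2 l : ℕ) : ℝ) / ((M + 1 : ℕ) : ℝ)))))
    (fun o => ((o.1 : ℕ) / (M : ℝ) - z i) ^ 2
      + ∑ l, ((o.2 l : ℕ) / ((M + 1 : ℕ) : ℝ) - z (i.succAbove l)) ^ 2)
    (fderiv ℝ φ z (Pi.single i 1)) (ε / 3 + ε / 3) K ((N + 1) / M) ?_ ?_ hK ?_ ?_
  · refine key.trans ?_
    rw [mul_div_assoc] at hm
    linarith
  · intro o
    exact mul_nonneg (bb_nonneg _ _ (hz' i))
      (Finset.prod_nonneg fun l _ => bb_nonneg _ _ (hz' _))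
  · rw [Fintype.sum_prod_type]
    simp only [← Finset.mul_sum]
    rw [prod_sum_one (fun l => z (i.succAbove l))]
    simp [bb_sum]
  · rintro ⟨k, j⟩
    have hk : (k : ℕ) ≤ M := Nat.lt_succ_iff.1 k.2
    have hy : ∀ l, ((j l : ℕ) : ℝ) / ((M + 1 : ℕ) : ℝ) ∈ Set.Icc (0 : ℝ) 1 :=
      fun l => ratio_mem (Nat.lt_succ_iff.1 (j l).2)
    obtain ⟨ξ, hξ, hc, he⟩ := mvt_part φ hd M k hk i _ hy
    simp only
    rw [he]
    have b1 := (h z hz _ (insert_mem i _ _ (ratio_mem hk) hy)).2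
    have b2 := (h _ (insert_mem i _ _ (ratio_mem hk) hy) _ (insert_mem i _ _ hξ hy)).1 (by
      intro l
      rcases Fin.eq_self_or_eq_succAbove i l with rfl | ⟨l, rfl⟩
      · simp only [Fin.insertNth_apply_same]
        rw [abs_sub_comm]
        refine hc.trans_lt ?_
        push_cast
        exact hm2
      · simpa using hδ)
    rw [Fin.sum_univ_succAbove _ i] at b1
    simp only [Fin.insertNth_apply_same, Fin.insertNth_apply_succAbove] at b1
    have b3 := abs_sub_le (fderiv ℝ φ z (Pi.single i 1))
      (fderiv ℝ φ (i.insertNth (((k : ℕ) : ℝ) / (M : ℝ))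
        (fun l => ((j l : ℕ) : ℝ) / ((M + 1 : ℕ) : ℝ))) (Pi.single i 1))
      (fderiv ℝ φ (i.insertNth ξ
        (fun l => ((j l : ℕ) : ℝ) / ((M + 1 : ℕ) : ℝ))) (Pi.single i 1))
    linarith
  · rw [Fintype.sum_prod_type]
    have v1 := bb_var hm0 (hz' i)
    have v2 := prod_var (n := M + 1) (by omega) (fun l => z (i.succAbove l)) (fun l => hz' _)
    have s1 := prod_sum_one (n := M + 1) (fun l => z (i.succAbove l))
    have s2 := bb_sum M (z i)
    have e : ∀ k : Fin (M + 1), ∑ j : Fin N → Fin (M + 1 + 1),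
        bb M k (z i) * (∏ l, bb (M + 1) (j l) (z (i.succAbove l))) *
          (((k : ℕ) / (M : ℝ) - z i) ^ 2
            + ∑ l, ((j l : ℕ) / ((M + 1 : ℕ) : ℝ) - z (i.succAbove l)) ^ 2)
        = bb M k (z i) * ((k : ℕ) / (M : ℝ) - z i) ^ 2 *
            (∑ j : Fin N → Fin (M + 1 + 1), ∏ l, bb (M + 1) (j l) (z (i.succAbove l)))
          + bb M k (z i) * ∑ j : Fin N → Fin (M + 1 + 1),
            (∏ l, bb (M + 1) (j l) (z (i.succAbove l))) *
              ∑ l, ((j l : ℕ) / ((M + 1 : ℕ) : ℝ) - z (i.succAbove l)) ^ 2 := by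
      intro k
      rw [Finset.mul_sum, Finset.mul_sum, ← Finset.sum_add_distrib]
      refine Finset.sum_congr rfl fun j _ => ?_
      ring
    simp only [e]
    rw [Finset.sum_add_distrib, s1, ← Finset.sum_mul, ← Finset.sum_mul, s2]
    simp only [mul_one, one_mul]
    have v3 : (N : ℝ) / ((M + 1 : ℕ) : ℝ) ≤ N / M := by
      gcongr
      omega
    rw [add_div]
    linarith

/-- Lemma 3.3 / `t:bernie`: for a `C¹` function
`φ : [0,1]^N → ℝ` (i.e. `C¹` on an open neighbourhood of the cube), the
Bernstein polynomials `φ_m` converge to `φ` uniformly on `[0,1]^N`, together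
with all first partial derivatives. -/
theorem stmt7 {N : ℕ} (hN : 1 ≤ N) (φ : (Fin N → ℝ) → ℝ)
    (U : Set (Fin N → ℝ)) (hU : IsOpen U) (hUcube : unitCube N ⊆ U)
    (hφ : ContDiffOn ℝ 1 φ U) :
    ∀ ε : ℝ, 0 < ε → ∃ M : ℕ, 1 ≤ M ∧ ∀ m : ℕ, M ≤ m →
      ∀ z ∈ unitCube N,
        |φ z - bernstein' φ m z| ≤ ε ∧
        ∀ i : Fin N,
          |fderiv ℝ φ z (Pi.single i 1) -
            fderiv ℝ (bernstein' φ m) z (Pi.single i 1)| ≤ ε := by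
  intro ε hε
  obtain ⟨n, rfl⟩ : ∃ n, N = n + 1 := ⟨N - 1, by omega⟩
  have hd : ∀ z ∈ unitCube (n + 1), DifferentiableAt ℝ φ z := fun z hz =>
    (hφ.differentiableOn (by norm_num)).differentiableAt (hU.mem_nhds (hUcube hz))
  have hg : ∀ i : Fin (n + 1),
      ContinuousOn (fun z => fderiv ℝ φ z (Pi.single i 1)) (unitCube (n + 1)) := fun i =>
    ((hφ.continuousOn_fderiv_of_isOpen hU le_rfl).mono hUcube).clm_apply continuousOn_const
  have h1 := unif_part φ (hφ.continuousOn.mono hUcube) ε hε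
  have h2 := eventually_all.2 fun i => deriv_part φ hd i (hg i) ε hε
  obtain ⟨M, hM⟩ := eventually_atTop.1 (h1.and h2)
  refine ⟨max M 1, le_max_right _ _, fun m hm z hz => ?_⟩
  obtain ⟨ha, hb⟩ := hM m ((le_max_left _ _).trans hm)
  exact ⟨ha z hz, fun i => hb i z hz⟩

end
end

section
/- Under Assumptions (A1)–(A4), fix t ≥ 1 and suppose in addition that: P^t is separable in L_v^∞ (for every ε > 0 there exist finitely many s_i ∈ L_v^∞ and finite signed measures ν_i with ‖ν_i‖_v < ∞ such that sup{‖P^t f − Σ s_i ν_i(f)‖_v : ‖f‖_v ≤ 1} ≤ ε); and each component kernel Q^t_{i,j} (1 ≤ i,j ≤ ℓ) is separable in L_v^∞ in the same sense. Then the kernels can be approximated by their two-sided truncations: lim_{n→∞} sup{ ‖P^t f − χ_n · P^t(χ_n f)‖_{v,1} : f ∈ L_v^1, ‖f‖_{v,1} ≤ 1 } = 0, and for each 1 ≤ i,j ≤ ℓ, lim_{n→∞} sup{ ‖Q^t_{i,j} g − χ_n · Q^t_{i,j}(χ_n g)‖_v : g measurable, ‖g‖_v ≤ 1 } = 0. 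-/
open MeasureTheory Filter
open scoped ENNReal

noncomputable section

/-- Partial derivative `∂ᵢ f` of a function on `ℝ^ℓ`. -/
noncomputable def pd {ℓ : ℕ} (i : Fin ℓ) (f : (Fin ℓ → ℝ) → ℝ) (x : Fin ℓ → ℝ) : ℝ :=
  fderiv ℝ f x (Pi.single i 1)

/-- Weighted sup norm `‖f‖_w`. -/
noncomputable def wnorm {ℓ : ℕ} (w f : (Fin ℓ → ℝ) → ℝ) : ℝ := ⨆ x, |f x| / w x

/-- Weighted Sobolev norm `‖f‖_{w,1}`. -/
noncomputable def wnorm1 {ℓ : ℕ} (w f : (Fin ℓ → ℝ) → ℝ) : ℝ :=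
  max (wnorm w f) (⨆ i : Fin ℓ, wnorm w (pd i f))

/-- Membership in `L_w^0`: continuous with finite `w`-norm. -/
def MemLw0 {ℓ : ℕ} (w f : (Fin ℓ → ℝ) → ℝ) : Prop :=
  Continuous f ∧ ∃ M : ℝ, ∀ x, |f x| ≤ M * w x

/-- Membership in the weighted Sobolev space `L_w^1`. -/
def MemLw1 {ℓ : ℕ} (w f : (Fin ℓ → ℝ) → ℝ) : Prop :=
  ContDiff ℝ 1 f ∧ (∃ M : ℝ, ∀ x, |f x| ≤ M * w x) ∧
    ∀ i : Fin ℓ, ∃ M : ℝ, ∀ x, |pd i f x| ≤ M * w x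

/-- One-step transition operator of the model `X(t+1) = a(X(t), N(t+1))`,
`Pf(x) = E[f(a(x,N))]`, where `μ` is the common law of the i.i.d. noise. -/
noncomputable def Pstep {ℓ m : ℕ} (μ : Measure (Fin m → ℝ))
    (a : (Fin ℓ → ℝ) → (Fin m → ℝ) → (Fin ℓ → ℝ))
    (f : (Fin ℓ → ℝ) → ℝ) (x : Fin ℓ → ℝ) : ℝ :=
  ∫ n, f (a x n) ∂μ

/-- `t`-step transition operator: `Pt t f x = E_x[f(X(t))]`. -/
noncomputable def Pt {ℓ m : ℕ} (μ : Measure (Fin m → ℝ))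
    (a : (Fin ℓ → ℝ) → (Fin m → ℝ) → (Fin ℓ → ℝ)) :
    ℕ → ((Fin ℓ → ℝ) → ℝ) → (Fin ℓ → ℝ) → ℝ
  | 0 => fun f => f
  | t + 1 => fun f => Pstep μ a (Pt μ a t f)

/-- The semigroup `Q^t` defined through the sensitivity process:
`Q^t g (x) = E_x[S(t)ᵀ g(X(t))]` with `S(0) = I`, `S(t+1) = A(t+1) S(t)`,
`A(t)ᵀ = ∇ₓ a(X(t-1), N(t))`.  Equivalently (by the Markov property and the
chain rule) it satisfies the recursion
`Q^{t+1} g (x) = ∫ ∇ₓa(x,n) · (Q^t g)(a(x,n)) μ(dn)`. -/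
noncomputable def Qt {ℓ m : ℕ} (μ : Measure (Fin m → ℝ))
    (a : (Fin ℓ → ℝ) → (Fin m → ℝ) → (Fin ℓ → ℝ)) :
    ℕ → ((Fin ℓ → ℝ) → (Fin ℓ → ℝ)) → (Fin ℓ → ℝ) → (Fin ℓ → ℝ)
  | 0 => fun g => g
  | t + 1 => fun g x i =>
      ∫ n, (∑ j, fderiv ℝ (fun z => a z n) x (Pi.single i 1) j *
        Qt μ a t g (a x n) j) ∂μ

/-- Component kernels `Q^t_{i,j} h (x) = E_x[S_{j,i}(t) h(X(t))]`. -/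
noncomputable def Qtij {ℓ m : ℕ} (μ : Measure (Fin m → ℝ))
    (a : (Fin ℓ → ℝ) → (Fin m → ℝ) → (Fin ℓ → ℝ))
    (t : ℕ) (i j : Fin ℓ) (h : (Fin ℓ → ℝ) → ℝ) (x : Fin ℓ → ℝ) : ℝ :=
  Qt μ a t (fun y => Pi.single j (h y)) x i

/-- Invariance of a measure `π` for the transition kernel
`P(x,A) = μ{n : a(x,n) ∈ A}`. -/
def InvariantProb {ℓ m : ℕ} (μ : Measure (Fin m → ℝ))
    (a : (Fin ℓ → ℝ) → (Fin m → ℝ) → (Fin ℓ → ℝ))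
    (π : Measure (Fin ℓ → ℝ)) : Prop :=
  ∀ A : Set (Fin ℓ → ℝ), MeasurableSet A → ∫⁻ x, μ {n | a x n ∈ A} ∂π = π A

/-- Assumptions (A1)–(A4) of the paper for the nonlinear state space model
`X(t+1) = a(X(t), N(t+1))` with i.i.d. noise of law `μ`. -/
structure Assumptions (ℓ m : ℕ) (μ : Measure (Fin m → ℝ))
    (a : (Fin ℓ → ℝ) → (Fin m → ℝ) → (Fin ℓ → ℝ))
    (V W : (Fin ℓ → ℝ) → ℝ) (C : Set (Fin ℓ → ℝ)) (δ b : ℝ) : Prop where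
  hℓ : 1 ≤ ℓ
  hμ : IsProbabilityMeasure μ
  ha_cont : Continuous fun q : (Fin ℓ → ℝ) × (Fin m → ℝ) => a q.1 q.2
  -- (A1)
  hA1_smooth : ∀ n, ContDiff ℝ 1 fun x => a x n
  hA1_bdd : ∃ K : ℝ, ∀ x n, ‖fderiv ℝ (fun z => a z n) x‖ ≤ K
  -- (A2)
  hA2 : ∃ t0 : ℕ, 1 ≤ t0 ∧ ∃ p : (Fin ℓ → ℝ) → (Fin ℓ → ℝ) → ℝ,
    ContDiff ℝ 1 (fun q : (Fin ℓ → ℝ) × (Fin ℓ → ℝ) => p q.1 q.2) ∧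
    ∀ x (A : Set (Fin ℓ → ℝ)), MeasurableSet A →
      Pt μ a t0 (Set.indicator A fun _ => (1:ℝ)) x = ∫ y in A, p x y
  -- (A3)
  hA3 : ∃ x0 : Fin ℓ → ℝ, ∀ x (O : Set (Fin ℓ → ℝ)), IsOpen O → x0 ∈ O →
    ∃ T : ℕ, ∀ t ≥ T, 0 < Pt μ a t (Set.indicator O fun _ => (1:ℝ)) x
  -- (A4)
  hV_smooth : ContDiff ℝ 1 V
  hV_pos : ∀ x, 0 < V x
  hV_cpt : ∀ r : ℝ, IsCompact {x | V x ≤ r}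
  hW_smooth : ContDiff ℝ 1 W
  hW_one : ∀ x, 1 ≤ W x
  hW_cpt : ∀ r : ℝ, IsCompact {x | W x ≤ r}
  hC : IsCompact C
  hδ : 0 < δ
  hDV3 : ∀ x, Real.log (Pstep μ a (fun y => Real.exp (V y)) x) - V x ≤
    -δ * W x + b * Set.indicator C (fun _ => (1:ℝ)) x

end

open MeasureTheory

noncomputable section

/-- Weighted sup norm `‖f‖_w`, valued in `ℝ≥0∞`. -/
noncomputable def ewnorm {ℓ : ℕ} (w f : (Fin ℓ → ℝ) → ℝ) : ℝ≥0∞ :=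
  ⨆ x, ENNReal.ofReal (|f x| / w x)

/-- Weighted Sobolev norm `‖f‖_{w,1}`, valued in `ℝ≥0∞`. -/
noncomputable def ewnorm1 {ℓ : ℕ} (w f : (Fin ℓ → ℝ) → ℝ) : ℝ≥0∞ :=
  ewnorm w f ⊔ ⨆ i : Fin ℓ, ewnorm w (pd i f)

/-- The smooth truncation functions `χ_n`: `C¹` functions with values in
`[0,1]`, equal to `1` on `[−n,n]^ℓ`, vanishing outside `[−(n+1),n+1]^ℓ`, and
with partial derivatives bounded by `2`. -/
structure TruncFam (ℓ : ℕ) (χ : ℕ → (Fin ℓ → ℝ) → ℝ) : Prop where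
  smooth : ∀ n, ContDiff ℝ 1 (χ n)
  mem01 : ∀ n x, χ n x ∈ Set.Icc (0:ℝ) 1
  eq_one : ∀ (n : ℕ) x, (∀ i, |x i| ≤ (n : ℝ)) → χ n x = 1
  eq_zero : ∀ (n : ℕ) x, ¬ (∀ i, |x i| ≤ (n : ℝ) + 1) → χ n x = 0
  deriv_bdd : ∀ (n : ℕ) (i : Fin ℓ) x, |pd i (χ n) x| ≤ 2

/-- Separability of an operator in `L_v^∞`, `v = e^V`. -/
def SepOp {ℓ : ℕ} (V : (Fin ℓ → ℝ) → ℝ)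
    (T : ((Fin ℓ → ℝ) → ℝ) → (Fin ℓ → ℝ) → ℝ) : Prop :=
  ∀ ε : ℝ, 0 < ε →
      ∃ (N : ℕ) (s : Fin N → (Fin ℓ → ℝ) → ℝ)
        (νp νm : Fin N → Measure (Fin ℓ → ℝ)),
        (∀ i, Measurable (s i) ∧ ∃ M : ℝ, ∀ x, |s i x| ≤ M * Real.exp (V x)) ∧
        (∀ i, IsFiniteMeasure (νp i) ∧ IsFiniteMeasure (νm i) ∧
          (∫⁻ x, ENNReal.ofReal (Real.exp (V x)) ∂(νp i)) ≠ ⊤ ∧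
          (∫⁻ x, ENNReal.ofReal (Real.exp (V x)) ∂(νm i)) ≠ ⊤) ∧
        ∀ f : (Fin ℓ → ℝ) → ℝ, Measurable f → (∀ x, |f x| ≤ Real.exp (V x)) →
          ∀ x, |T f x -
            ∑ i, s i x * ((∫ y, f y ∂(νp i)) - ∫ y, f y ∂(νm i))| ≤
              ε * Real.exp (V x)

lemma int_exp {ℓ : ℕ} {V : (Fin ℓ → ℝ) → ℝ} (hV : Continuous V) {ν : Measure (Fin ℓ → ℝ)}
    (h : (∫⁻ x, ENNReal.ofReal (Real.exp (V x)) ∂ν) ≠ ⊤) :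
    Integrable (fun x => Real.exp (V x)) ν := by
  have hc : Continuous (fun x => Real.exp (V x)) := Real.continuous_exp.comp hV
  refine ⟨hc.aestronglyMeasurable, ?_⟩
  rw [hasFiniteIntegral_iff_ofReal (Eventually.of_forall fun x => (Real.exp_pos _).le)]
  exact lt_top_iff_ne_top.2 h

lemma int_dom {ℓ : ℕ} {V : (Fin ℓ → ℝ) → ℝ} (hV : Continuous V) {ν : Measure (Fin ℓ → ℝ)}
    (h : (∫⁻ x, ENNReal.ofReal (Real.exp (V x)) ∂ν) ≠ ⊤) {g : (Fin ℓ → ℝ) → ℝ}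
    (hg : Measurable g) (hb : ∀ x, |g x| ≤ Real.exp (V x)) : Integrable g ν :=
  (int_exp hV h).mono' hg.aestronglyMeasurable (Eventually.of_forall hb)

lemma sep_add_core {ℓ : ℕ} {V : (Fin ℓ → ℝ) → ℝ} (hV : Continuous V)
    {T : ((Fin ℓ → ℝ) → ℝ) → (Fin ℓ → ℝ) → ℝ} (hs : SepOp V T)
    {g h : (Fin ℓ → ℝ) → ℝ} (hg : Measurable g) (hh : Measurable h)
    (bg : ∀ x, |g x| ≤ Real.exp (V x)) (bh : ∀ x, |h x| ≤ Real.exp (V x))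
    (bgh : ∀ x, |g x + h x| ≤ Real.exp (V x)) (x : Fin ℓ → ℝ) :
    T (fun y => g y + h y) x = T g x + T h x := by
  have key : ∀ η : ℝ, 0 < η → |T (fun y => g y + h y) x - (T g x + T h x)| ≤ 0 + η := by
    intro η hη
    have hv := Real.exp_pos (V x)
    obtain ⟨N, s, νp, νm, -, hν, happ⟩ := hs (η / (3 * Real.exp (V x))) (by positivity)
    have h1 := happ _ hg bg x
    have h2 := happ _ hh bh x
    have h3 := happ (fun y => g y + h y) (hg.add hh) bgh x
    have e : ∑ i, s i x * ((∫ y, (g y + h y) ∂(νp i)) - ∫ y, (g y + h y) ∂(νm i))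
        = ∑ i, s i x * ((∫ y, g y ∂(νp i)) - ∫ y, g y ∂(νm i))
        + ∑ i, s i x * ((∫ y, h y ∂(νp i)) - ∫ y, h y ∂(νm i)) := by
      rw [← Finset.sum_add_distrib]
      refine Finset.sum_congr rfl fun i _ => ?_
      obtain ⟨-, -, ip, im⟩ := hν i
      rw [integral_add (int_dom hV ip hg bg) (int_dom hV ip hh bh),
        integral_add (int_dom hV im hg bg) (int_dom hV im hh bh)]
      ring
    rw [e] at h3
    have e2 : η / (3 * Real.exp (V x)) * Real.exp (V x) = η / 3 := by
      field_simp
    rw [e2] at h1 h2 h3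
    rw [abs_le] at *
    constructor <;> linarith [h1.1, h1.2, h2.1, h2.2, h3.1, h3.2]
  have := abs_nonpos_iff.1 (le_of_forall_pos_le_add key)
  linarith

def Hom {ℓ : ℕ} (T : ((Fin ℓ → ℝ) → ℝ) → (Fin ℓ → ℝ) → ℝ) : Prop :=
  ∀ (c : ℝ) g x, T (fun y => c * g y) x = c * T g x

lemma sep_add {ℓ : ℕ} {V : (Fin ℓ → ℝ) → ℝ} (hV : Continuous V)
    {T : ((Fin ℓ → ℝ) → ℝ) → (Fin ℓ → ℝ) → ℝ} (hs : SepOp V T) (hT : Hom T)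
    {g h : (Fin ℓ → ℝ) → ℝ} (hg : Measurable g) (hh : Measurable h) {c : ℝ} (hc : 0 < c)
    (bg : ∀ x, |g x| ≤ c * Real.exp (V x)) (bh : ∀ x, |h x| ≤ c * Real.exp (V x))
    (x : Fin ℓ → ℝ) :
    T (fun y => g y + h y) x = T g x + T h x := by
  have hc' : (0:ℝ) < (2 * c)⁻¹ := by positivity
  have sc : ∀ (u : ℝ) y, |u| ≤ 2 * c * Real.exp (V y) → |(2 * c)⁻¹ * u| ≤ Real.exp (V y) := by
    intro u y hu
    rw [abs_mul, abs_of_pos hc', inv_mul_le_iff₀ (by positivity)]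
    exact hu
  have k := sep_add_core hV hs (g := fun y => (2 * c)⁻¹ * g y) (h := fun y => (2 * c)⁻¹ * h y)
    (hg.const_mul _) (hh.const_mul _)
    (fun y => sc _ _ (by nlinarith [bg y, abs_nonneg (g y)]))
    (fun y => sc _ _ (by nlinarith [bh y, abs_nonneg (h y)]))
    (fun y => by
      rw [← mul_add]
      exact sc _ _ (by linarith [abs_add_le (g y) (h y), bg y, bh y])) x
  have e : (fun y => (2 * c)⁻¹ * g y + (2 * c)⁻¹ * h y)
      = fun y => (2 * c)⁻¹ * (g y + h y) := by
    funext y; ring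
  rw [e, hT _ (fun y => g y + h y), hT _ g, hT _ h, ← mul_add] at k
  exact mul_left_cancel₀ hc'.ne' k

lemma tail_int {ℓ : ℕ} {V : (Fin ℓ → ℝ) → ℝ} (hV : Continuous V) {ν : Measure (Fin ℓ → ℝ)}
    (h : (∫⁻ x, ENNReal.ofReal (Real.exp (V x)) ∂ν) ≠ ⊤) :
    Tendsto (fun n : ℕ => ∫ x in {x | (n : ℝ) ≤ ‖x‖}, Real.exp (V x) ∂ν) atTop (nhds 0) := by
  have := tendsto_setIntegral_of_antitone (μ := ν) (f := fun x => Real.exp (V x))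
    (s := fun n : ℕ => {x : Fin ℓ → ℝ | (n : ℝ) ≤ ‖x‖})
    (fun n => measurableSet_le measurable_const measurable_norm)
    (fun n k hnk x hx => by
      have : (n : ℝ) ≤ k := by exact_mod_cast hnk
      exact this.trans hx)
    ⟨0, (int_exp hV h).integrableOn⟩
  have e : (⋂ n : ℕ, {x : Fin ℓ → ℝ | (n : ℝ) ≤ ‖x‖}) = ∅ := by
    ext x
    simp only [Set.mem_iInter, Set.mem_ofPred_eq, Set.mem_empty_iff_false, iff_false, not_forall,
      not_le]
    exact exists_nat_gt _
  rw [e] at this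
  simpa using this

lemma tail_le {ℓ : ℕ} {V : (Fin ℓ → ℝ) → ℝ} (hV : Continuous V) {ν : Measure (Fin ℓ → ℝ)}
    (h : (∫⁻ x, ENNReal.ofReal (Real.exp (V x)) ∂ν) ≠ ⊤) {g : (Fin ℓ → ℝ) → ℝ}
    (hb : ∀ x, |g x| ≤ Real.exp (V x)) (n : ℕ)
    (h0 : ∀ x, ‖x‖ < n → g x = 0) :
    |∫ x, g x ∂ν| ≤ ∫ x in {x | (n : ℝ) ≤ ‖x‖}, Real.exp (V x) ∂ν := by
  have hS : MeasurableSet {x : Fin ℓ → ℝ | (n : ℝ) ≤ ‖x‖} :=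
    measurableSet_le measurable_const measurable_norm
  rw [← integral_indicator hS, ← Real.norm_eq_abs]
  refine norm_integral_le_of_norm_le ((int_exp hV h).indicator hS) (Eventually.of_forall fun x => ?_)
  by_cases hx : (n : ℝ) ≤ ‖x‖
  · rw [Set.indicator_of_mem (by exact hx)]; exact hb x
  · rw [Set.indicator_of_notMem (by exact hx), h0 x (not_le.1 hx)]; simp

/-- Uniform smallness on functions supported far away. -/
lemma sep_tail {ℓ : ℕ} {V : (Fin ℓ → ℝ) → ℝ} (hV : Continuous V)
    {T : ((Fin ℓ → ℝ) → ℝ) → (Fin ℓ → ℝ) → ℝ} (hs : SepOp V T) {ε : ℝ} (hε : 0 < ε) :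
    ∃ N : ℕ, ∀ n ≥ N, ∀ g : (Fin ℓ → ℝ) → ℝ, Measurable g → (∀ x, |g x| ≤ Real.exp (V x)) →
      (∀ x, ‖x‖ < n → g x = 0) → ∀ x, |T g x| ≤ ε * Real.exp (V x) := by
  obtain ⟨N, s, νp, νm, hsb, hν, happ⟩ := hs (ε / 2) (by positivity)
  choose M hM using fun i => (hsb i).2
  have lim : Tendsto (fun n : ℕ => ∑ i, |M i| *
      ((∫ x in {x | (n : ℝ) ≤ ‖x‖}, Real.exp (V x) ∂(νp i)) +
        ∫ x in {x | (n : ℝ) ≤ ‖x‖}, Real.exp (V x) ∂(νm i))) atTop (nhds 0) := by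
    have := tendsto_finsetSum (Finset.univ : Finset (Fin N)) (fun i _ =>
      ((tail_int hV (hν i).2.2.1).add (tail_int hV (hν i).2.2.2)).const_mul |M i|)
    simpa using this
  obtain ⟨N0, hN0⟩ := eventually_atTop.1 (lim.eventually (gt_mem_nhds (half_pos hε)))
  refine ⟨N0, fun n hn g hg hb h0 x => ?_⟩
  have h1 := happ g hg hb x
  have hv := Real.exp_pos (V x)
  have h2 : |∑ i, s i x * ((∫ y, g y ∂(νp i)) - ∫ y, g y ∂(νm i))| ≤ ε / 2 * Real.exp (V x) := by
    refine (Finset.abs_sum_le_sum_abs _ _).trans ?_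
    refine le_trans ?_ (mul_le_mul_of_nonneg_right (hN0 n hn).le hv.le)
    rw [Finset.sum_mul]
    refine Finset.sum_le_sum fun i _ => ?_
    rw [abs_mul]
    have a1 := tail_le hV (hν i).2.2.1 hb n h0
    have a2 := tail_le hV (hν i).2.2.2 hb n h0
    have a3 : |s i x| ≤ |M i| * Real.exp (V x) :=
      (hM i x).trans (mul_le_mul_of_nonneg_right (le_abs_self _) hv.le)
    have a4 : |(∫ y, g y ∂(νp i)) - ∫ y, g y ∂(νm i)| ≤ 
      ((∫ x in {x | (n : ℝ) ≤ ‖x‖}, Real.exp (V x) ∂(νp i)) +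
        ∫ x in {x | (n : ℝ) ≤ ‖x‖}, Real.exp (V x) ∂(νm i)) :=
      (abs_sub _ _).trans (add_le_add a1 a2)
    calc _ ≤ _ := mul_le_mul a3 a4 (abs_nonneg _) (by positivity)
      _ = _ := by ring
  rw [abs_le] at *
  constructor <;> linarith [h1.1, h1.2, h2.1, h2.2]

lemma sep_tail_c {ℓ : ℕ} {V : (Fin ℓ → ℝ) → ℝ} (hV : Continuous V)
    {T : ((Fin ℓ → ℝ) → ℝ) → (Fin ℓ → ℝ) → ℝ} (hs : SepOp V T) (hT : Hom T)
    {c : ℝ} (hc : 0 < c) {ε : ℝ} (hε : 0 < ε) :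
    ∃ N : ℕ, ∀ n ≥ N, ∀ g : (Fin ℓ → ℝ) → ℝ, Measurable g →
      (∀ x, |g x| ≤ c * Real.exp (V x)) →
      (∀ x, ‖x‖ < n → g x = 0) → ∀ x, |T g x| ≤ ε * Real.exp (V x) := by
  obtain ⟨N, hN⟩ := sep_tail hV hs (show 0 < ε / c by positivity)
  refine ⟨N, fun n hn g hg hb h0 x => ?_⟩
  have := hN n hn (fun y => c⁻¹ * g y) (hg.const_mul _) (fun y => by
    rw [abs_mul, abs_of_pos (inv_pos.2 hc), inv_mul_le_iff₀ hc]; exact hb y)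
    (fun y hy => by simp [h0 y hy]) x
  rw [hT, abs_mul, abs_of_pos (inv_pos.2 hc), inv_mul_le_iff₀ hc] at this
  calc _ ≤ _ := this
    _ = _ := by field_simp

/-- Boundedness on bounded functions. -/
def BddOp {ℓ : ℕ} (T : ((Fin ℓ → ℝ) → ℝ) → (Fin ℓ → ℝ) → ℝ) : Prop :=
  ∃ B : ℝ, 0 ≤ B ∧ ∀ (c : ℝ) g, 0 ≤ c → (∀ y, |g y| ≤ c) → ∀ x, |T g x| ≤ B * c

/-- Uniform smallness of the image far away. -/
lemma sep_far {ℓ : ℕ} {V : (Fin ℓ → ℝ) → ℝ} (hV : Continuous V)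
    (hcpt : ∀ r : ℝ, IsCompact {x | V x ≤ r})
    {T : ((Fin ℓ → ℝ) → ℝ) → (Fin ℓ → ℝ) → ℝ} (hs : SepOp V T) (hT : Hom T) (hB : BddOp T)
    {ε : ℝ} (hε : 0 < ε) :
    ∃ N : ℕ, ∀ n ≥ N, ∀ g : (Fin ℓ → ℝ) → ℝ, Measurable g → (∀ x, |g x| ≤ Real.exp (V x)) →
      ∀ x, (n : ℝ) ≤ ‖x‖ → |T g x| ≤ ε * Real.exp (V x) := by
  obtain ⟨B, hB0, hB⟩ := hB
  obtain ⟨N1, hN1⟩ := sep_tail hV hs (half_pos hε)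
  obtain ⟨K, hK⟩ := (isCompact_closedBall (0 : Fin ℓ → ℝ) N1).exists_bound_of_continuousOn
    (f := fun x => Real.exp (V x)) (Real.continuous_exp.comp hV).continuousOn
  obtain ⟨R, hR⟩ := (hcpt (Real.log ((B * |K| + 1) / (ε / 2)))).isBounded.exists_norm_le
  obtain ⟨N2, hN2⟩ := exists_nat_gt R
  refine ⟨N2, fun n hn g hg hb x hx => ?_⟩
  have hv := Real.exp_pos (V x)
  have hVx : Real.log ((B * |K| + 1) / (ε / 2)) < V x := by
    by_contra hcon
    have h1 := hR x (not_lt.1 hcon)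
    have h2 : (N2 : ℝ) ≤ n := by exact_mod_cast hn
    linarith
  have hbig : B * |K| ≤ ε / 2 * Real.exp (V x) := by
    have h3 : (B * |K| + 1) / (ε / 2) < Real.exp (V x) :=
      (Real.log_lt_iff_lt_exp (by positivity)).1 hVx
    rw [div_lt_iff₀ (by positivity)] at h3
    linarith
  have hS : MeasurableSet {y : Fin ℓ → ℝ | ‖y‖ < N1} :=
    measurableSet_lt measurable_norm measurable_const
  set g1 := Set.indicator {y : Fin ℓ → ℝ | ‖y‖ < N1} g with hg1
  set g2 := Set.indicator {y : Fin ℓ → ℝ | ‖y‖ < N1}ᶜ g with hg2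
  have e : (fun y => g1 y + g2 y) = g := by
    funext y
    exact congrFun (Set.indicator_self_add_compl {y : Fin ℓ → ℝ | ‖y‖ < N1} g) y
  have ib : ∀ (S : Set (Fin ℓ → ℝ)) y, |Set.indicator S g y| ≤ Real.exp (V y) := by
    intro S y
    by_cases hy : y ∈ S
    · rw [Set.indicator_of_mem hy]; exact hb y
    · rw [Set.indicator_of_notMem hy]; simpa using (Real.exp_pos _).le
  have k := sep_add hV hs hT (hg.indicator hS) (hg.indicator hS.compl) one_pos
    (fun y => by rw [one_mul]; exact ib _ y) (fun y => by rw [one_mul]; exact ib _ y) x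
  change T (fun y => g1 y + g2 y) x = T g1 x + T g2 x at k
  rw [e] at k
  have b2 : |T g2 x| ≤ ε / 2 * Real.exp (V x) :=
    hN1 N1 le_rfl g2 (hg.indicator hS.compl) (ib _) (fun y hy => by
      rw [hg2, Set.indicator_of_notMem]; simpa using hy) x
  have b1 : |T g1 x| ≤ B * |K| := by
    refine hB |K| g1 (abs_nonneg _) (fun y => ?_) x
    by_cases hy : ‖y‖ < N1
    · refine (ib _ y).trans ?_
      have := hK y (by simpa using hy.le)
      rw [Real.norm_eq_abs, abs_of_pos (Real.exp_pos _)] at this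
      exact this.trans (le_abs_self _)
    · rw [hg1, Set.indicator_of_notMem (by exact hy)]; simp
  rw [k]
  linarith [abs_add_le (T g1 x) (T g2 x)]

lemma chi_one {ℓ : ℕ} {χ : ℕ → (Fin ℓ → ℝ) → ℝ} (hχ : TruncFam ℓ χ) (n : ℕ) {x : Fin ℓ → ℝ}
    (hx : ‖x‖ < n) : χ n x = 1 :=
  hχ.eq_one n x fun i => (norm_le_pi_norm x i).trans hx.le

lemma chi_mul_le {ℓ : ℕ} {χ : ℕ → (Fin ℓ → ℝ) → ℝ} (hχ : TruncFam ℓ χ) (n : ℕ) (x : Fin ℓ → ℝ)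
    {u w : ℝ} (h : |u| ≤ w) : |χ n x * u| ≤ w ∧ |(1 - χ n x) * u| ≤ w := by
  obtain ⟨h0, h1⟩ := hχ.mem01 n x
  rw [abs_mul, abs_mul, abs_of_nonneg h0, abs_of_nonneg (sub_nonneg.2 h1)]
  constructor <;> nlinarith [abs_nonneg u]

/-- Two-sided truncation. -/
lemma sep_trunc {ℓ : ℕ} {V : (Fin ℓ → ℝ) → ℝ} (hV : Continuous V)
    (hcpt : ∀ r : ℝ, IsCompact {x | V x ≤ r})
    {T : ((Fin ℓ → ℝ) → ℝ) → (Fin ℓ → ℝ) → ℝ} (hs : SepOp V T) (hT : Hom T) (hB : BddOp T)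
    {χ : ℕ → (Fin ℓ → ℝ) → ℝ} (hχ : TruncFam ℓ χ)
    {ε : ℝ} (hε : 0 < ε) :
    ∃ N : ℕ, ∀ n ≥ N, ∀ g : (Fin ℓ → ℝ) → ℝ, Measurable g → (∀ x, |g x| ≤ Real.exp (V x)) →
      ∀ x, |T g x - χ n x * T (fun y => χ n y * g y) x| ≤ ε * Real.exp (V x) := by
  obtain ⟨N1, h1⟩ := sep_tail hV hs (half_pos hε)
  obtain ⟨N2, h2⟩ := sep_far hV hcpt hs hT hB (half_pos hε)
  refine ⟨max N1 N2, fun n hn g hg hb x => ?_⟩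
  have hm := (hχ.smooth n).continuous.measurable
  have mg1 : Measurable (fun y => χ n y * g y) := hm.mul hg
  have mg2 : Measurable (fun y => (1 - χ n y) * g y) := (measurable_const.sub hm).mul hg
  have k := sep_add hV hs hT mg1 mg2 one_pos
    (fun y => by rw [one_mul]; exact (chi_mul_le hχ n y (hb y)).1)
    (fun y => by rw [one_mul]; exact (chi_mul_le hχ n y (hb y)).2) x
  have e : (fun y => χ n y * g y + (1 - χ n y) * g y) = g := by funext y; ring
  rw [e] at k
  have t1 := h1 n (le_trans (le_max_left _ _) hn) _ mg2 (fun y => (chi_mul_le hχ n y (hb y)).2)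
    (fun y hy => by simp [chi_one hχ n hy]) x
  have t2 : |(1 - χ n x) * T (fun y => χ n y * g y) x| ≤ ε / 2 * Real.exp (V x) := by
    by_cases hx : ‖x‖ < n
    · rw [chi_one hχ n hx]; simp; positivity
    · exact (chi_mul_le hχ n x (h2 n (le_trans (le_max_right _ _) hn) _ mg1
        (fun y => (chi_mul_le hχ n y (hb y)).1) x (not_lt.1 hx))).2
  rw [k]
  rw [abs_le] at *
  constructor <;> linarith [t1.1, t1.2, t2.1, t2.2]

lemma Pt_hom {ℓ m : ℕ} (μ : Measure (Fin m → ℝ))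
    (a : (Fin ℓ → ℝ) → (Fin m → ℝ) → (Fin ℓ → ℝ)) (t : ℕ) : Hom (Pt μ a t) := by
  intro c g
  induction t with
  | zero => intro x; rfl
  | succ t ih =>
    intro x
    change ∫ n, Pt μ a t (fun y => c * g y) (a x n) ∂μ = c * ∫ n, Pt μ a t g (a x n) ∂μ
    rw [← integral_const_mul]
    exact integral_congr_ae (Eventually.of_forall fun n => ih _)

lemma Pt_bdd {ℓ m : ℕ} (μ : Measure (Fin m → ℝ)) [IsProbabilityMeasure μ]
    (a : (Fin ℓ → ℝ) → (Fin m → ℝ) → (Fin ℓ → ℝ)) (t : ℕ) : BddOp (Pt μ a t) := by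
  refine ⟨1, zero_le_one, fun c g hc hg => ?_⟩
  rw [one_mul]
  induction t with
  | zero => exact hg
  | succ t ih =>
    intro x
    have := norm_integral_le_of_norm_le_const (μ := μ) (f := fun n => Pt μ a t g (a x n))
      (C := c) (Eventually.of_forall fun n => ih _)
    simpa [Pt, Pstep] using this

lemma Qt_hom {ℓ m : ℕ} (μ : Measure (Fin m → ℝ))
    (a : (Fin ℓ → ℝ) → (Fin m → ℝ) → (Fin ℓ → ℝ)) (t : ℕ) (c : ℝ)
    (g : (Fin ℓ → ℝ) → (Fin ℓ → ℝ)) :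
    ∀ x i, Qt μ a t (fun y j => c * g y j) x i = c * Qt μ a t g x i := by
  induction t with
  | zero => intro x i; rfl
  | succ t ih =>
    intro x i
    simp only [Qt]
    rw [← integral_const_mul]
    refine integral_congr_ae (Eventually.of_forall fun n => ?_)
    simp only [ih, Finset.mul_sum]
    exact Finset.sum_congr rfl fun j _ => by ring

lemma Qtij_hom {ℓ m : ℕ} (μ : Measure (Fin m → ℝ))
    (a : (Fin ℓ → ℝ) → (Fin m → ℝ) → (Fin ℓ → ℝ)) (t : ℕ) (i j : Fin ℓ) :
    Hom (Qtij μ a t i j) := by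
  intro c g x
  unfold Qtij
  rw [← Qt_hom]
  congr 1
  funext y k
  by_cases hk : k = j
  · subst hk; simp
  · simp [Pi.single_eq_of_ne hk]

lemma jac_le {ℓ m : ℕ} {a : (Fin ℓ → ℝ) → (Fin m → ℝ) → (Fin ℓ → ℝ)} {K : ℝ}
    (hK : ∀ x n, ‖fderiv ℝ (fun z => a z n) x‖ ≤ K) (x : Fin ℓ → ℝ) (n : Fin m → ℝ)
    (i j : Fin ℓ) : |fderiv ℝ (fun z => a z n) x (Pi.single i 1) j| ≤ K := by
  refine (norm_le_pi_norm (fderiv ℝ (fun z => a z n) x (Pi.single i 1)) j).trans ?_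
  refine (ContinuousLinearMap.le_opNorm _ _).trans ?_
  rw [Pi.norm_single]
  simpa using hK x n

lemma Qt_bdd {ℓ m : ℕ} (μ : Measure (Fin m → ℝ)) [IsProbabilityMeasure μ]
    {a : (Fin ℓ → ℝ) → (Fin m → ℝ) → (Fin ℓ → ℝ)} {K : ℝ}
    (hK : ∀ x n, ‖fderiv ℝ (fun z => a z n) x‖ ≤ K) (t : ℕ) :
    ∃ B : ℝ, 0 ≤ B ∧ ∀ (c : ℝ) (g : (Fin ℓ → ℝ) → (Fin ℓ → ℝ)), 0 ≤ c → (∀ y j, |g y j| ≤ c) →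
      ∀ x i, |Qt μ a t g x i| ≤ B * c := by
  have hK0 : 0 ≤ K := (norm_nonneg _).trans (hK 0 0)
  induction t with
  | zero => exact ⟨1, zero_le_one, fun c g _ hg x i => by rw [one_mul]; exact hg x i⟩
  | succ t ih =>
    obtain ⟨B, hB0, hB⟩ := ih
    refine ⟨ℓ * (K * B), by positivity, fun c g hc hg x i => ?_⟩
    have := norm_integral_le_of_norm_le_const (μ := μ)
      (f := fun n => ∑ j, fderiv ℝ (fun z => a z n) x (Pi.single i 1) j * Qt μ a t g (a x n) j)
      (C := ℓ * (K * B) * c) (Eventually.of_forall fun n => ?_)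
    · simpa [Qt] using this
    · refine (norm_sum_le _ _).trans ?_
      refine (Finset.sum_le_card_nsmul _ _ (K * (B * c)) fun j _ => ?_).trans ?_
      · rw [norm_mul]
        exact mul_le_mul (jac_le hK x n i j) (hB c g hc hg _ j) (norm_nonneg _) hK0
      · simp; apply le_of_eq; ring

lemma Qtij_bdd {ℓ m : ℕ} (μ : Measure (Fin m → ℝ)) [IsProbabilityMeasure μ]
    {a : (Fin ℓ → ℝ) → (Fin m → ℝ) → (Fin ℓ → ℝ)} {K : ℝ}
    (hK : ∀ x n, ‖fderiv ℝ (fun z => a z n) x‖ ≤ K) (t : ℕ) (i j : Fin ℓ) :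
    BddOp (Qtij μ a t i j) := by
  obtain ⟨B, hB0, hB⟩ := Qt_bdd μ hK t
  refine ⟨B, hB0, fun c g hc hg x => hB c _ hc (fun y k => ?_) x i⟩
  by_cases hk : k = j
  · subst hk; simpa using hg y
  · simpa [Pi.single_eq_of_ne hk] using hc

lemma jac_meas {ℓ m : ℕ} {a : (Fin ℓ → ℝ) → (Fin m → ℝ) → (Fin ℓ → ℝ)}
    (ha : Continuous fun q : (Fin ℓ → ℝ) × (Fin m → ℝ) => a q.1 q.2) (i j : Fin ℓ) :
    Measurable (fun q : (Fin ℓ → ℝ) × (Fin m → ℝ) =>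
      fderiv ℝ (fun z => a z q.2) q.1 (Pi.single i 1) j) := by
  have h : Continuous (Function.uncurry fun (n : Fin m → ℝ) (z : Fin ℓ → ℝ) => a z n) :=
    ha.comp continuous_swap
  have h1 := measurable_fderiv_apply_const_with_param ℝ h (Pi.single i 1)
  exact (measurable_pi_apply j).comp (h1.comp measurable_swap)

lemma Qt_meas {ℓ m : ℕ} (μ : Measure (Fin m → ℝ)) [IsProbabilityMeasure μ]
    {a : (Fin ℓ → ℝ) → (Fin m → ℝ) → (Fin ℓ → ℝ)}
    (ha : Continuous fun q : (Fin ℓ → ℝ) × (Fin m → ℝ) => a q.1 q.2) (t : ℕ)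
    {g : (Fin ℓ → ℝ) → (Fin ℓ → ℝ)} (hg : ∀ j, Measurable fun y => g y j) :
    ∀ i, Measurable fun x => Qt μ a t g x i := by
  induction t with
  | zero => exact hg
  | succ t ih =>
    intro i
    have : Measurable (fun q : (Fin ℓ → ℝ) × (Fin m → ℝ) =>
        ∑ j, fderiv ℝ (fun z => a z q.2) q.1 (Pi.single i 1) j * Qt μ a t g (a q.1 q.2) j) :=
      Finset.measurable_sum _ fun j _ => (jac_meas ha i j).mul ((ih j).comp ha.measurable)
    exact (this.stronglyMeasurable.integral_prod_right' (ν := μ)).measurable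

lemma Qt_int {ℓ m : ℕ} (μ : Measure (Fin m → ℝ)) [IsProbabilityMeasure μ]
    {a : (Fin ℓ → ℝ) → (Fin m → ℝ) → (Fin ℓ → ℝ)}
    (ha : Continuous fun q : (Fin ℓ → ℝ) × (Fin m → ℝ) => a q.1 q.2) {K : ℝ}
    (hK : ∀ x n, ‖fderiv ℝ (fun z => a z n) x‖ ≤ K) (t : ℕ)
    {g : (Fin ℓ → ℝ) → (Fin ℓ → ℝ)} (hg : ∀ j, Measurable fun y => g y j) {c : ℝ} (hc : 0 ≤ c)
    (hb : ∀ y j, |g y j| ≤ c) (x : Fin ℓ → ℝ) (i k : Fin ℓ) :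
    Integrable (fun n => fderiv ℝ (fun z => a z n) x (Pi.single i 1) k * Qt μ a t g (a x n) k)
      μ := by
  have hK0 : 0 ≤ K := (norm_nonneg _).trans (hK 0 0)
  obtain ⟨B, hB0, hB⟩ := Qt_bdd μ hK t
  have m1 : Measurable fun n => fderiv ℝ (fun z => a z n) x (Pi.single i 1) k :=
    (jac_meas ha i k).comp (measurable_const.prodMk measurable_id)
  have m2 : Measurable fun n => Qt μ a t g (a x n) k :=
    ((Qt_meas μ ha t hg k).comp ha.measurable).comp (measurable_const.prodMk measurable_id)
  refine Integrable.of_bound (m1.mul m2).aestronglyMeasurable (K * (B * c))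
    (Eventually.of_forall fun n => ?_)
  rw [norm_mul]
  exact mul_le_mul (jac_le hK x n i k) (hB c g hc hb _ k) (norm_nonneg _) hK0

/-- Decomposition of `Q^t` into its component kernels on bounded functions. -/
lemma Qt_eq_sum {ℓ m : ℕ} (μ : Measure (Fin m → ℝ)) [IsProbabilityMeasure μ]
    {a : (Fin ℓ → ℝ) → (Fin m → ℝ) → (Fin ℓ → ℝ)}
    (ha : Continuous fun q : (Fin ℓ → ℝ) × (Fin m → ℝ) => a q.1 q.2) {K : ℝ}
    (hK : ∀ x n, ‖fderiv ℝ (fun z => a z n) x‖ ≤ K) (t : ℕ)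
    {g : (Fin ℓ → ℝ) → (Fin ℓ → ℝ)} (hg : ∀ j, Measurable fun y => g y j) {c : ℝ} (hc : 0 ≤ c)
    (hb : ∀ y j, |g y j| ≤ c) : ∀ x i,
    Qt μ a t g x i = ∑ j, Qtij μ a t i j (fun y => g y j) x := by
  induction t with
  | zero =>
    intro x i
    simp [Qtij, Qt, Pi.single_apply]
  | succ t ih =>
    intro x i
    have mj : ∀ j k, Measurable fun y => (Pi.single j (g y j) : Fin ℓ → ℝ) k := by
      intro j k
      by_cases hk : k = j
      · subst hk; simpa using hg k
      · simp [Pi.single_eq_of_ne hk]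
    have bj : ∀ j y k, |(Pi.single j (g y j) : Fin ℓ → ℝ) k| ≤ c := by
      intro j y k
      by_cases hk : k = j
      · subst hk; simpa using hb y k
      · simpa [Pi.single_eq_of_ne hk] using hc
    simp only [Qtij, Qt]
    rw [← integral_finsetSum]
    · refine integral_congr_ae (Eventually.of_forall fun n => ?_)
      simp only [ih, Qtij, Finset.mul_sum]
      exact Finset.sum_comm
    · intro j _
      exact integrable_finsetSum _ fun k _ => Qt_int μ ha hK t (mj j) hc (bj j) x i k

lemma clm_sum {ℓ : ℕ} (L : (Fin ℓ → ℝ) →L[ℝ] ℝ) (w : Fin ℓ → ℝ) :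
    L w = ∑ j, w j * L (Pi.single j 1) := by
  conv_lhs => rw [pi_eq_sum_univ' w]
  simp [map_sum]

/-- Differentiation formula on functions with bounded derivative. -/
lemma Pt_deriv_bdd {ℓ m : ℕ} (μ : Measure (Fin m → ℝ)) [IsProbabilityMeasure μ]
    {a : (Fin ℓ → ℝ) → (Fin m → ℝ) → (Fin ℓ → ℝ)}
    (ha : Continuous fun q : (Fin ℓ → ℝ) × (Fin m → ℝ) => a q.1 q.2)
    (has : ∀ n, ContDiff ℝ 1 fun x => a x n) {K : ℝ}
    (hK : ∀ x n, ‖fderiv ℝ (fun z => a z n) x‖ ≤ K) (t : ℕ)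
    {f : (Fin ℓ → ℝ) → ℝ} (hf : Differentiable ℝ f) {c : ℝ} (hc : 0 ≤ c)
    (hb : ∀ y, |f y| ≤ c) (hd : ∀ y, ‖fderiv ℝ f y‖ ≤ c) :
    Differentiable ℝ (Pt μ a t f) ∧ (∃ c', ∀ x, ‖fderiv ℝ (Pt μ a t f) x‖ ≤ c') ∧
      ∀ x i, pd i (Pt μ a t f) x = Qt μ a t (fun y j => pd j f y) x i := by
  have hK0 : 0 ≤ K := (norm_nonneg _).trans (hK 0 0)
  induction t with
  | zero => exact ⟨hf, ⟨c, hd⟩, fun x i => rfl⟩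
  | succ t ih =>
    obtain ⟨ihd, ⟨c', ihb⟩, ihe⟩ := ih
    obtain ⟨B, hB0, hB⟩ := Pt_bdd μ a t
    set h := Pt μ a t f with hh
    have hc'0 : 0 ≤ c' := (norm_nonneg _).trans (ihb 0)
    have hcomp : ∀ x n, HasFDerivAt (fun z => h (a z n))
        ((fderiv ℝ h (a x n)).comp (fderiv ℝ (fun z => a z n) x)) x := fun x n =>
      (ihd (a x n)).hasFDerivAt.comp x ((has n).differentiable one_ne_zero x).hasFDerivAt
    have hbd : ∀ x n, ‖(fderiv ℝ h (a x n)).comp (fderiv ℝ (fun z => a z n) x)‖ ≤ c' * K :=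
      fun x n => (ContinuousLinearMap.opNorm_comp_le _ _).trans
        (mul_le_mul (ihb _) (hK x n) (norm_nonneg _) hc'0)
    have hcx : ∀ x, Continuous fun n => h (a x n) := fun x =>
      ihd.continuous.comp (ha.comp (Continuous.prodMk continuous_const continuous_id))
    have hF'm : ∀ x, AEStronglyMeasurable
        (fun n => (fderiv ℝ h (a x n)).comp (fderiv ℝ (fun z => a z n) x)) μ := by
      intro x
      have h0 : Continuous (Function.uncurry fun (n : Fin m → ℝ) (z : Fin ℓ → ℝ) => h (a z n)) :=
        ihd.continuous.comp (ha.comp continuous_swap)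
      have h1 := measurable_fderiv_with_param ℝ h0
      have h2 : Measurable fun n => fderiv ℝ (fun z => h (a z n)) x :=
        h1.comp (measurable_id.prodMk measurable_const)
      have h3 : (fun n => fderiv ℝ (fun z => h (a z n)) x)
          = fun n => (fderiv ℝ h (a x n)).comp (fderiv ℝ (fun z => a z n) x) :=
        funext fun n => (hcomp x n).fderiv
      rw [← h3]
      exact h2.aestronglyMeasurable
    have hint : ∀ x, Integrable
        (fun n => (fderiv ℝ h (a x n)).comp (fderiv ℝ (fun z => a z n) x)) μ := fun x =>
      Integrable.of_bound (hF'm x) (c' * K) (Eventually.of_forall fun n => hbd x n)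
    have main : ∀ x, HasFDerivAt (Pt μ a (t + 1) f)
        (∫ n, (fderiv ℝ h (a x n)).comp (fderiv ℝ (fun z => a z n) x) ∂μ) x := by
      intro x
      refine hasFDerivAt_integral_of_dominated_of_fderiv_le (F := fun x n => h (a x n))
        (F' := fun x n => (fderiv ℝ h (a x n)).comp (fderiv ℝ (fun z => a z n) x))
        (bound := fun _ => c' * K) (s := Set.univ) univ_mem
        (Eventually.of_forall fun y => (hcx y).aestronglyMeasurable) ?_ (hF'm x)
        (Eventually.of_forall fun n y _ => hbd y n) (integrable_const _)
        (Eventually.of_forall fun n y _ => hcomp y n)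
      exact Integrable.of_bound (hcx x).aestronglyMeasurable (B * c)
        (Eventually.of_forall fun n => hB c f hc hb _)
    refine ⟨fun x => (main x).differentiableAt, ⟨c' * K, fun x => ?_⟩, fun x i => ?_⟩
    · rw [(main x).fderiv]
      have := norm_integral_le_of_norm_le_const (μ := μ) (Eventually.of_forall fun n => hbd x n)
      simpa using this
    · unfold pd
      rw [(main x).fderiv, ContinuousLinearMap.integral_apply (hint x)]
      simp only [Qt]
      refine integral_congr_ae (Eventually.of_forall fun n => ?_)
      simp only [ContinuousLinearMap.comp_apply]
      rw [clm_sum]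
      refine Finset.sum_congr rfl fun j _ => ?_
      exact congrArg _ (ihe (a x n) j)

lemma pd_meas {ℓ : ℕ} (j : Fin ℓ) (f : (Fin ℓ → ℝ) → ℝ) : Measurable (pd j f) :=
  measurable_fderiv_apply_const ℝ f _

lemma pd_mul {ℓ : ℕ} (j : Fin ℓ) {f g : (Fin ℓ → ℝ) → ℝ} {x : Fin ℓ → ℝ}
    (hf : DifferentiableAt ℝ f x) (hg : DifferentiableAt ℝ g x) :
    pd j (fun y => f y * g y) x = f x * pd j g x + g x * pd j f x := by
  unfold pd
  rw [fderiv_fun_mul hf hg]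
  simp

lemma pd_chi_zero {ℓ : ℕ} {χ : ℕ → (Fin ℓ → ℝ) → ℝ} (hχ : TruncFam ℓ χ) (n : ℕ) (j : Fin ℓ)
    {x : Fin ℓ → ℝ} (hx : ‖x‖ < n) : pd j (χ n) x = 0 := by
  have : χ n =ᶠ[nhds x] fun _ => (1 : ℝ) := by
    filter_upwards [(isOpen_lt continuous_norm continuous_const).mem_nhds hx] with y hy
    exact chi_one hχ n hy
  unfold pd
  rw [this.fderiv_eq]
  simp

lemma Pt_chi {ℓ m : ℕ} (μ : Measure (Fin m → ℝ)) [IsProbabilityMeasure μ]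
    {a : (Fin ℓ → ℝ) → (Fin m → ℝ) → (Fin ℓ → ℝ)}
    (ha : Continuous fun q : (Fin ℓ → ℝ) × (Fin m → ℝ) => a q.1 q.2)
    (has : ∀ n, ContDiff ℝ 1 fun x => a x n) {K : ℝ}
    (hK : ∀ x n, ‖fderiv ℝ (fun z => a z n) x‖ ≤ K) (t : ℕ)
    {χ : ℕ → (Fin ℓ → ℝ) → ℝ} (hχ : TruncFam ℓ χ) (n : ℕ)
    {f : (Fin ℓ → ℝ) → ℝ} (hf : ContDiff ℝ 1 f) :
    Differentiable ℝ (Pt μ a t (fun y => χ n y * f y)) ∧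
      ∀ x i, pd i (Pt μ a t (fun y => χ n y * f y)) x
        = ∑ j, Qtij μ a t i j (fun y => χ n y * pd j f y + f y * pd j (χ n) y) x := by
  have hs : ContDiff ℝ 1 (fun y => χ n y * f y) := (hχ.smooth n).mul hf
  have hcs : HasCompactSupport (fun y => χ n y * f y) := by
    refine HasCompactSupport.intro (isCompact_closedBall (0 : Fin ℓ → ℝ) (n + 1)) fun x hx => ?_
    rw [hχ.eq_zero n x, zero_mul]
    intro hcon
    apply hx
    rw [mem_closedBall_zero_iff]
    exact (pi_norm_le_iff_of_nonneg (by positivity)).2 hcon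
  obtain ⟨c1, h1⟩ := hs.continuous.bounded_above_of_compact_support hcs
  obtain ⟨c2, h2⟩ := (hs.continuous_fderiv one_ne_zero).bounded_above_of_compact_support
    (hcs.fderiv ℝ)
  have hc : 0 ≤ max c1 c2 := le_trans ((norm_nonneg _).trans (h1 0)) (le_max_left _ _)
  obtain ⟨d, -, e⟩ := Pt_deriv_bdd μ ha has hK t (hs.differentiable one_ne_zero) hc
    (fun y => (h1 y).trans (le_max_left _ _)) (fun y => (h2 y).trans (le_max_right _ _))
  refine ⟨d, fun x i => ?_⟩
  rw [e, Qt_eq_sum μ ha hK t (fun j => pd_meas j _) hc]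
  · refine Finset.sum_congr rfl fun j _ => ?_
    congr 1
    funext y
    exact pd_mul j ((hχ.smooth n).differentiable one_ne_zero y) (hf.differentiable one_ne_zero y)
  · intro y j
    refine ((fderiv ℝ (fun y => χ n y * f y) y).le_opNorm _).trans ?_
    rw [Pi.norm_single]
    simpa using Or.inr (h2 y)

lemma err_bd {ℓ : ℕ} {V : (Fin ℓ → ℝ) → ℝ} {χ : ℕ → (Fin ℓ → ℝ) → ℝ} (hχ : TruncFam ℓ χ) (n : ℕ)
    {f : (Fin ℓ → ℝ) → ℝ} (bf : ∀ x, |f x| ≤ Real.exp (V x)) (j : Fin ℓ) (x : Fin ℓ → ℝ) :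
    |f x * pd j (χ n) x| ≤ 2 * Real.exp (V x) := by
  rw [abs_mul, mul_comm]
  exact mul_le_mul (hχ.deriv_bdd n j x) (bf x) (abs_nonneg _) zero_le_two

/-- Coordinate projection. -/
def prj {ℓ : ℕ} (i : Fin ℓ) : (Fin ℓ → ℝ) →L[ℝ] ℝ :=
  ContinuousLinearMap.proj (φ := fun _ : Fin ℓ => ℝ) i

lemma prj_apply {ℓ : ℕ} (i : Fin ℓ) (w : Fin ℓ → ℝ) : prj i w = w i := rfl

lemma prj_sub_le {ℓ : ℕ} (i : Fin ℓ) (u w : ℝ) : ‖u • prj i - w • prj i‖ ≤ ‖u - w‖ := by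
  refine ContinuousLinearMap.opNorm_le_bound _ (norm_nonneg _) fun z => ?_
  have e : (u • prj i - w • prj i) z = (u - w) * z i := by
    change u * z i - w * z i = _
    ring
  rw [e, norm_mul]
  exact mul_le_mul_of_nonneg_left (norm_le_pi_norm z i) (norm_nonneg _)

/-- Differentiation formula `∂ᵢ P^t f = ∑ⱼ Q^t_{i,j} ∂ⱼ f` on the unit ball of `L_v^1`. -/
lemma Pt_hasFDeriv {ℓ m : ℕ} (μ : Measure (Fin m → ℝ)) [IsProbabilityMeasure μ]
    {a : (Fin ℓ → ℝ) → (Fin m → ℝ) → (Fin ℓ → ℝ)}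
    (ha : Continuous fun q : (Fin ℓ → ℝ) × (Fin m → ℝ) => a q.1 q.2)
    (has : ∀ n, ContDiff ℝ 1 fun x => a x n) {K : ℝ}
    (hK : ∀ x n, ‖fderiv ℝ (fun z => a z n) x‖ ≤ K) (t : ℕ)
    {V : (Fin ℓ → ℝ) → ℝ} (hV : Continuous V)
    (hP : SepOp V (Pt μ a t)) (hQ : ∀ i j, SepOp V (Qtij μ a t i j))
    {χ : ℕ → (Fin ℓ → ℝ) → ℝ} (hχ : TruncFam ℓ χ)
    {f : (Fin ℓ → ℝ) → ℝ} (hf : ContDiff ℝ 1 f) (bf : ∀ x, |f x| ≤ Real.exp (V x))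
    (bd : ∀ (i : Fin ℓ) x, |pd i f x| ≤ Real.exp (V x)) (x : Fin ℓ → ℝ) :
    DifferentiableAt ℝ (Pt μ a t f) x ∧
      ∀ i, pd i (Pt μ a t f) x = ∑ j, Qtij μ a t i j (pd j f) x := by
  set D : ((Fin ℓ → (Fin ℓ → ℝ) → ℝ)) → (Fin ℓ → ℝ) → (Fin ℓ → ℝ) →L[ℝ] ℝ := fun G y =>
    ∑ i, (∑ j, Qtij μ a t i j (G j) y) • prj i
    with hD
  have key : HasFDerivAt (Pt μ a t f) (D (fun j => pd j f) x) x := by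
    refine hasFDerivAt_of_tendstoUniformlyOnFilter (l := atTop)
      (f := fun n : ℕ => Pt μ a t (fun y => χ n y * f y))
      (f' := fun n : ℕ => D (fun j y => χ n y * pd j f y + f y * pd j (χ n) y))
      (g' := D (fun j => pd j f)) ?_ ?_ ?_
    · rw [Metric.tendstoUniformlyOnFilter_iff]
      intro ε hε
      set R : ℝ := Real.exp (V x) + 1 with hR
      have hR0 : 0 < R := by positivity
      set η : ℝ := ε / ((ℓ * ℓ + 1) * R) with hη
      have hη0 : 0 < η := by positivity
      choose N hN using fun i j => sep_tail_c hV (hQ i j) (Qtij_hom μ a t i j) three_pos hη0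
      have hnear : ∀ᶠ y in nhds x, Real.exp (V y) < R :=
        (Real.continuous_exp.comp hV).continuousAt.eventually
          (gt_mem_nhds (show Real.exp (V x) < R by linarith))
      have hlarge : ∀ᶠ n : ℕ in atTop, ∀ i j, N i j ≤ n :=
        eventually_all.2 fun i => eventually_all.2 fun j => eventually_ge_atTop _
      filter_upwards [hlarge.prod_mk hnear] with q hq
      obtain ⟨n, y⟩ := q
      obtain ⟨hn, hy⟩ := hq
      simp only at hn hy
      have hterm : ∀ i j, |Qtij μ a t i j (pd j f) y
          - Qtij μ a t i j (fun z => χ n z * pd j f z + f z * pd j (χ n) z) y| ≤ η * R := by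
        intro i j
        have mχ := (hχ.smooth n).continuous.measurable
        have m1 : Measurable fun z => χ n z * pd j f z + f z * pd j (χ n) z :=
          (mχ.mul (pd_meas j f)).add (hf.continuous.measurable.mul (pd_meas j _))
        have m2 : Measurable fun z => (1 - χ n z) * pd j f z - f z * pd j (χ n) z :=
          ((measurable_const.sub mχ).mul (pd_meas j f)).sub
            (hf.continuous.measurable.mul (pd_meas j _))
        have b1 : ∀ z, |χ n z * pd j f z + f z * pd j (χ n) z| ≤ 3 * Real.exp (V z) := fun z => by
          linarith [abs_add_le (χ n z * pd j f z) (f z * pd j (χ n) z),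
            (chi_mul_le hχ n z (bd j z)).1, err_bd hχ n bf j z]
        have b2 : ∀ z, |(1 - χ n z) * pd j f z - f z * pd j (χ n) z| ≤ 3 * Real.exp (V z) :=
          fun z => by
          linarith [abs_sub ((1 - χ n z) * pd j f z) (f z * pd j (χ n) z),
            (chi_mul_le hχ n z (bd j z)).2, err_bd hχ n bf j z]
        have k := sep_add hV (hQ i j) (Qtij_hom μ a t i j) m1 m2 three_pos b1 b2 y
        have e : (fun z => (χ n z * pd j f z + f z * pd j (χ n) z)
            + ((1 - χ n z) * pd j f z - f z * pd j (χ n) z)) = pd j f := by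
          funext z; ring
        rw [e] at k
        rw [k, add_sub_cancel_left]
        refine (hN i j n (hn i j) _ m2 b2 (fun z hz => ?_) y).trans
          (mul_le_mul_of_nonneg_left hy.le hη0.le)
        rw [chi_one hχ n hz, pd_chi_zero hχ n j hz]; ring
      rw [dist_eq_norm]
      have hle : ‖D (fun j => pd j f) y
          - D (fun j z => χ n z * pd j f z + f z * pd j (χ n) z) y‖ ≤ ℓ * (ℓ * (η * R)) := by
        simp only [hD]
        rw [← Finset.sum_sub_distrib]
        refine (norm_sum_le _ _).trans ?_
        refine (Finset.sum_le_card_nsmul _ _ (ℓ * (η * R)) fun i _ => ?_).trans (by simp)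
        refine (prj_sub_le i _ _).trans ?_
        rw [← Finset.sum_sub_distrib]
        refine (norm_sum_le _ _).trans ?_
        exact (Finset.sum_le_card_nsmul _ _ (η * R) fun j _ => hterm i j).trans (by simp)
      refine hle.trans_lt ?_
      have e2 : η * R * (ℓ * ℓ + 1) = ε := by
        rw [hη]; field_simp
      nlinarith [mul_pos hη0 hR0]
    · refine Eventually.of_forall fun q => ?_
      obtain ⟨d, e⟩ := Pt_chi μ ha has hK t hχ q.1 hf
      have h1 := (d q.2).hasFDerivAt
      refine h1.congr_fderiv (Eq.symm (ContinuousLinearMap.ext fun w => ?_))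
      rw [clm_sum (fderiv ℝ _ _) w]
      simp only [hD, sum_apply, smul_apply,
        prj_apply, smul_eq_mul]
      refine Finset.sum_congr rfl fun i _ => ?_
      rw [mul_comm, ← e]
      rfl
    · refine Eventually.of_forall fun y => ?_
      rw [Metric.tendsto_atTop]
      intro ε hε
      have hv := Real.exp_pos (V y)
      obtain ⟨N, hN⟩ := sep_tail hV hP (show 0 < ε / (2 * Real.exp (V y)) by positivity)
      refine ⟨N, fun n hn => ?_⟩
      have mχ := (hχ.smooth n).continuous.measurable
      have mf := hf.continuous.measurable
      have k := sep_add hV hP (Pt_hom μ a t) (g := fun z => χ n z * f z)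
        (h := fun z => (1 - χ n z) * f z) (mχ.mul mf) ((measurable_const.sub mχ).mul mf) one_pos
        (fun z => by rw [one_mul]; exact (chi_mul_le hχ n z (bf z)).1)
        (fun z => by rw [one_mul]; exact (chi_mul_le hχ n z (bf z)).2) y
      have e : (fun z => χ n z * f z + (1 - χ n z) * f z) = f := by funext z; ring
      rw [e] at k
      have := hN n hn (fun z => (1 - χ n z) * f z) ((measurable_const.sub mχ).mul mf)
        (fun z => (chi_mul_le hχ n z (bf z)).2) (fun z hz => by simp [chi_one hχ n hz]) y
      rw [dist_comm, Real.dist_eq, k, add_sub_cancel_left]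
      have e2 : ε / (2 * Real.exp (V y)) * Real.exp (V y) = ε / 2 := by field_simp
      linarith
  refine ⟨key.differentiableAt, fun i => ?_⟩
  unfold pd
  rw [key.fderiv]
  simp only [hD, sum_apply, smul_apply,
    prj_apply, smul_eq_mul]
  simp [Pi.single_apply]
  rfl

/-- Real `ε`-form of convergence to zero in the `e^V`-weighted norms. -/
lemma tendsto_of_eps {ι : Type*} (F : ℕ → ι → ℝ≥0∞)
    (h : ∀ ε : ℝ, 0 < ε → ∃ N, ∀ n ≥ N, ∀ f, F n f ≤ ENNReal.ofReal ε) :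
    Tendsto (fun n => ⨆ f, F n f) atTop (nhds 0) := by
  rw [ENNReal.tendsto_atTop_zero]
  intro ε hε
  obtain ⟨r, hr0, hr⟩ := ENNReal.lt_iff_exists_nnreal_btwn.1 hε
  obtain ⟨N, hN⟩ := h r (by exact_mod_cast hr0)
  refine ⟨N, fun n hn => (iSup_le fun f => hN n hn f).trans ?_⟩
  rw [ENNReal.ofReal_coe_nnreal]
  exact hr.le

lemma ewnorm_le {ℓ : ℕ} {V F : (Fin ℓ → ℝ) → ℝ} {ε : ℝ}
    (h : ∀ x, |F x| ≤ ε * Real.exp (V x)) :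
    ewnorm (fun x => Real.exp (V x)) F ≤ ENNReal.ofReal ε :=
  iSup_le fun x => ENNReal.ofReal_le_ofReal ((div_le_iff₀ (Real.exp_pos _)).2 (h x))

/-- Lemma A.5 / `t:PfandQtruncation`: under (A1)–(A4), if
for some `t ≥ 1` the kernel `P^t` and the component kernels `Q^t_{i,j}` are
separable in `L_v^∞` (`v = e^V`), then they can be approximated by their
two-sided truncations: `χ_n · P^t(χ_n ·) → P^t` in the induced
`‖·‖_{v,1}`-operator norm on `L_v^1`, and `χ_n · Q^t_{i,j}(χ_n ·) → Q^t_{i,j}`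
in the induced `‖·‖_v`-operator norm. -/
theorem stmt19 {ℓ m : ℕ} (μ : Measure (Fin m → ℝ))
    (a : (Fin ℓ → ℝ) → (Fin m → ℝ) → (Fin ℓ → ℝ))
    (V W : (Fin ℓ → ℝ) → ℝ) (C : Set (Fin ℓ → ℝ)) (δ b : ℝ)
    (H : Assumptions ℓ m μ a V W C δ b)
    (χ : ℕ → (Fin ℓ → ℝ) → ℝ) (hχ : TruncFam ℓ χ)
    (t : ℕ) (ht : 1 ≤ t)
    -- P^t separable in L_v^∞
    (hPsep : ∀ ε : ℝ, 0 < ε →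
      ∃ (N : ℕ) (s : Fin N → (Fin ℓ → ℝ) → ℝ)
        (νp νm : Fin N → Measure (Fin ℓ → ℝ)),
        (∀ i, Measurable (s i) ∧ ∃ M : ℝ, ∀ x, |s i x| ≤ M * Real.exp (V x)) ∧
        (∀ i, IsFiniteMeasure (νp i) ∧ IsFiniteMeasure (νm i) ∧
          (∫⁻ x, ENNReal.ofReal (Real.exp (V x)) ∂(νp i)) ≠ ⊤ ∧
          (∫⁻ x, ENNReal.ofReal (Real.exp (V x)) ∂(νm i)) ≠ ⊤) ∧
        ∀ f : (Fin ℓ → ℝ) → ℝ, Measurable f → (∀ x, |f x| ≤ Real.exp (V x)) →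
          ∀ x, |Pt μ a t f x -
            ∑ i, s i x * ((∫ y, f y ∂(νp i)) - ∫ y, f y ∂(νm i))| ≤
              ε * Real.exp (V x))
    -- each Q^t_{i,j} separable in L_v^∞
    (hQsep : ∀ i j : Fin ℓ, ∀ ε : ℝ, 0 < ε →
      ∃ (N : ℕ) (s : Fin N → (Fin ℓ → ℝ) → ℝ)
        (νp νm : Fin N → Measure (Fin ℓ → ℝ)),
        (∀ k, Measurable (s k) ∧ ∃ M : ℝ, ∀ x, |s k x| ≤ M * Real.exp (V x)) ∧
        (∀ k, IsFiniteMeasure (νp k) ∧ IsFiniteMeasure (νm k) ∧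
          (∫⁻ x, ENNReal.ofReal (Real.exp (V x)) ∂(νp k)) ≠ ⊤ ∧
          (∫⁻ x, ENNReal.ofReal (Real.exp (V x)) ∂(νm k)) ≠ ⊤) ∧
        ∀ g : (Fin ℓ → ℝ) → ℝ, Measurable g → (∀ x, |g x| ≤ Real.exp (V x)) →
          ∀ x, |Qtij μ a t i j g x -
            ∑ k, s k x * ((∫ y, g y ∂(νp k)) - ∫ y, g y ∂(νm k))| ≤
              ε * Real.exp (V x)) :
    Filter.Tendsto
      (fun n : ℕ =>
        ⨆ f : {f : (Fin ℓ → ℝ) → ℝ // MemLw1 (fun x => Real.exp (V x)) f ∧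
            (∀ x, |f x| ≤ Real.exp (V x)) ∧
            ∀ (i : Fin ℓ) x, |pd i f x| ≤ Real.exp (V x)},
          ewnorm1 (fun x => Real.exp (V x))
            (fun x => Pt μ a t f.1 x -
              χ n x * Pt μ a t (fun y => χ n y * f.1 y) x))
      Filter.atTop (nhds 0) ∧
    ∀ i j : Fin ℓ,
      Filter.Tendsto
        (fun n : ℕ =>
          ⨆ g : {g : (Fin ℓ → ℝ) → ℝ // Measurable g ∧
              ∀ x, |g x| ≤ Real.exp (V x)},
            ewnorm (fun x => Real.exp (V x))
              (fun x => Qtij μ a t i j g.1 x -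
                χ n x * Qtij μ a t i j (fun y => χ n y * g.1 y) x))
        Filter.atTop (nhds 0) := by
  have := H.hμ
  obtain ⟨K, hK⟩ := H.hA1_bdd
  have hV := H.hV_smooth.continuous
  have hP : SepOp V (Pt μ a t) := hPsep
  have hQ : ∀ i j, SepOp V (Qtij μ a t i j) := hQsep
  have hPh := Pt_hom μ a t
  have hQh := Qtij_hom μ a t
  have hPb := Pt_bdd μ a t
  have hQb := Qtij_bdd μ hK t
  refine ⟨tendsto_of_eps _ fun ε hε => ?_, fun i j => tendsto_of_eps _ fun ε hε => ?_⟩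
  · set η : ℝ := ε / (2 * ℓ + 2) with hη
    have hη0 : 0 < η := by positivity
    have hηε : η * (2 * ℓ + 2) = ε := by rw [hη]; field_simp
    obtain ⟨N1, h1⟩ := sep_trunc hV H.hV_cpt hP hPh hPb hχ hε
    obtain ⟨N2, h2⟩ := sep_far hV H.hV_cpt hP hPh hPb hη0
    choose N3 h3 using fun i j => sep_trunc hV H.hV_cpt (hQ i j) (hQh i j) (hQb i j) hχ hη0
    choose N4 h4 using fun i j => sep_tail_c hV (hQ i j) (hQh i j) two_pos hη0
    have hlarge : ∀ᶠ n : ℕ in atTop, N1 ≤ n ∧ N2 ≤ n ∧ ∀ i j, N3 i j ≤ n ∧ N4 i j ≤ n :=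
      (eventually_ge_atTop _).and ((eventually_ge_atTop _).and
        (eventually_all.2 fun i => eventually_all.2 fun j =>
          (eventually_ge_atTop _).and (eventually_ge_atTop _)))
    obtain ⟨N, hN⟩ := eventually_atTop.1 hlarge
    refine ⟨N, fun n hn f => ?_⟩
    obtain ⟨g1, g2, g34⟩ := hN n hn
    obtain ⟨f, ⟨hf, -, -⟩, bf, bd⟩ := f
    have mf := hf.continuous.measurable
    have mχ := (hχ.smooth n).continuous.measurable
    refine sup_le (ewnorm_le fun x => h1 n g1 f mf bf x) (iSup_le fun i => ewnorm_le fun x => ?_)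
    have hv := Real.exp_pos (V x)
    obtain ⟨d1, e1⟩ := Pt_hasFDeriv μ H.ha_cont H.hA1_smooth hK t hV hP hQ hχ hf bf bd x
    obtain ⟨d2, e2⟩ := Pt_chi μ H.ha_cont H.hA1_smooth hK t hχ n hf
    have d3 : DifferentiableAt ℝ (χ n) x := (hχ.smooth n).differentiable one_ne_zero x
    have e3 : pd i (fun x => Pt μ a t f x - χ n x * Pt μ a t (fun y => χ n y * f y) x) x
        = pd i (Pt μ a t f) x
          - pd i (fun x => χ n x * Pt μ a t (fun y => χ n y * f y) x) x := by
      unfold pd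
      have d4 : DifferentiableAt ℝ
          (fun x => χ n x * Pt μ a t (fun y => χ n y * f y) x) x := d3.mul (d2 x)
      rw [fderiv_fun_sub d1 d4]
      rfl
    have split : ∀ j, Qtij μ a t i j (fun y => χ n y * pd j f y + f y * pd j (χ n) y) x
        = Qtij μ a t i j (fun y => χ n y * pd j f y) x
          + Qtij μ a t i j (fun y => f y * pd j (χ n) y) x := fun j =>
      sep_add hV (hQ i j) (hQh i j) (g := fun y => χ n y * pd j f y)
        (h := fun y => f y * pd j (χ n) y) (mχ.mul (pd_meas j f)) (mf.mul (pd_meas j _)) two_pos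
        (fun y => by linarith [(chi_mul_le hχ n y (bd j y)).1, Real.exp_pos (V y)])
        (err_bd hχ n bf j) x
    have e4 : pd i (fun x => Pt μ a t f x - χ n x * Pt μ a t (fun y => χ n y * f y) x) x
        = ∑ j, ((Qtij μ a t i j (pd j f) x - χ n x * Qtij μ a t i j (fun y => χ n y * pd j f y) x)
            - χ n x * Qtij μ a t i j (fun y => f y * pd j (χ n) y) x)
          - Pt μ a t (fun y => χ n y * f y) x * pd i (χ n) x := by
      rw [e3, pd_mul i d3 (d2 x), e1, e2, Finset.mul_sum, ← sub_sub, ← Finset.sum_sub_distrib]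
      congr 1
      refine Finset.sum_congr rfl fun j _ => ?_
      rw [split]
      ring
    have t1 : |∑ j, ((Qtij μ a t i j (pd j f) x
          - χ n x * Qtij μ a t i j (fun y => χ n y * pd j f y) x)
            - χ n x * Qtij μ a t i j (fun y => f y * pd j (χ n) y) x)|
          ≤ ℓ * (2 * (η * Real.exp (V x))) := by
      refine (Finset.abs_sum_le_sum_abs _ _).trans ?_
      refine (Finset.sum_le_card_nsmul _ _ (2 * (η * Real.exp (V x))) fun j _ => ?_).trans
        (by simp)
      have s1 := h3 i j n (g34 i j).1 (pd j f) (pd_meas j f) (bd j) x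
      have s2 := (chi_mul_le hχ n x (h4 i j n (g34 i j).2 (fun y => f y * pd j (χ n) y)
        (mf.mul (pd_meas j _)) (err_bd hχ n bf j)
        (fun y hy => by simp [pd_chi_zero hχ n j hy]) x)).1
      refine (abs_sub _ _).trans ?_
      linarith
    have t2 : |Pt μ a t (fun y => χ n y * f y) x * pd i (χ n) x|
        ≤ 2 * (η * Real.exp (V x)) := by
      by_cases hx : ‖x‖ < n
      · rw [pd_chi_zero hχ n i hx]; simp; positivity
      · have s1 := h2 n g2 (fun y => χ n y * f y) (mχ.mul mf)
          (fun y => (chi_mul_le hχ n y (bf y)).1) x (not_lt.1 hx)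
        rw [abs_mul, mul_comm]
        exact mul_le_mul (hχ.deriv_bdd n i x) s1 (abs_nonneg _) zero_le_two
    change |pd i (fun x => Pt μ a t f x - χ n x * Pt μ a t (fun y => χ n y * f y) x) x| ≤ _
    rw [e4]
    refine (abs_sub _ _).trans ((add_le_add t1 t2).trans (le_of_eq ?_))
    rw [← hηε]
    ring
  · obtain ⟨N, h⟩ := sep_trunc hV H.hV_cpt (hQ i j) (hQh i j) (hQb i j) hχ hε
    exact ⟨N, fun n hn g => ewnorm_le fun x => h n hn g.1 g.2.1 g.2.2 x⟩

end
end
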